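/- Fix real κ > 0 and η > 0. For every a ∈ (0, 1/2) and every M > 20 there exist f₀ > 0 and C > 0 such that for all f ∈ (0, f₀) and every z = re^{iθ} with r > f^a and r^{−3/2}·M·f·log(f⁻¹ + r) < θ < 4π/3 − (1 + r^{−1/2})·r⁻¹·M·f·log(f⁻¹ + r), one has |D_f(z) − F₂(z)| ≤ C·f²·r^{−5/2}·(1 + r^{−3/2}), where F₂(z) = ((2η·z^{1/2} + i)² + e^{4iκ·z^{1/2}})/(4zη²) is evaluated with the branch z^{1/2} = r^{1/2}e^{iθ/2} (log denotes the natural logarithm). -/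

import Mathlib

open Real

/-- Taylor coefficients of the Airy function `Ai`:
`a₀ = 3^{−2/3}/Γ(2/3)`, `a₁ = −3^{−1/3}/Γ(1/3)`, `a₂ = 0`,
`a_{k+3} = a_k/((k+3)(k+2))`. -/
noncomputable def airyCoeff : ℕ → ℂ
  | 0 => (3 : ℂ) ^ (-(2 : ℂ) / 3) / Complex.Gamma (2 / 3)
  | 1 => -((3 : ℂ) ^ (-(1 : ℂ) / 3) / Complex.Gamma (1 / 3))
  | 2 => 0
  | (k + 3) => airyCoeff k / (((k : ℂ) + 3) * ((k : ℂ) + 2))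

/-- The Airy function `Ai`, as the entire function with the above Taylor
coefficients at `0`. -/
noncomputable def Ai (z : ℂ) : ℂ := ∑' k : ℕ, airyCoeff k * z ^ k

/-- `ω = e^{2πi/3}` -/
noncomputable def ωc : ℂ := Complex.exp (2 * π * Complex.I / 3)

/-- `W = f^{1/3}·e^{−iπ/6}/(2π)` -/
noncomputable def Wf (f : ℝ) : ℂ :=
  ((f ^ ((1 : ℝ) / 3) : ℝ) : ℂ) * Complex.exp (-(π : ℂ) * Complex.I / 6) / (2 * π)

/-- `α₊(z) = Ai(−ω(z − κf)f^{−2/3})·Ai(−(z − κf)f^{−2/3})` -/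
noncomputable def alphaP (κ f : ℝ) (z : ℂ) : ℂ :=
  Ai (-ωc * (z - κ * f) * ((f ^ (-(2 : ℝ) / 3) : ℝ) : ℂ)) *
    Ai (-(z - κ * f) * ((f ^ (-(2 : ℝ) / 3) : ℝ) : ℂ))

/-- `α₋(z) = Ai(−ω(z + κf)f^{−2/3})·Ai(−(z + κf)f^{−2/3})` -/
noncomputable def alphaM (κ f : ℝ) (z : ℂ) : ℂ :=
  Ai (-ωc * (z + κ * f) * ((f ^ (-(2 : ℝ) / 3) : ℝ) : ℂ)) *
    Ai (-(z + κ * f) * ((f ^ (-(2 : ℝ) / 3) : ℝ) : ℂ))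

/-- `β₊(z) = Ai(−ω(z + κf)f^{−2/3})·Ai(−(z − κf)f^{−2/3})` -/
noncomputable def betaP (κ f : ℝ) (z : ℂ) : ℂ :=
  Ai (-ωc * (z + κ * f) * ((f ^ (-(2 : ℝ) / 3) : ℝ) : ℂ)) *
    Ai (-(z - κ * f) * ((f ^ (-(2 : ℝ) / 3) : ℝ) : ℂ))

/-- `β₋(z) = Ai(−ω(z − κf)f^{−2/3})·Ai(−(z + κf)f^{−2/3})` -/
noncomputable def betaM (κ f : ℝ) (z : ℂ) : ℂ :=
  Ai (-ωc * (z - κ * f) * ((f ^ (-(2 : ℝ) / 3) : ℝ) : ℂ)) *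
    Ai (-(z + κ * f) * ((f ^ (-(2 : ℝ) / 3) : ℝ) : ℂ))

/-- The resonance determinant `D_f` of the Stark Hamiltonian
`p² + fx + η⁻¹(δ_κ + δ_{−κ})`:
`D_f(z) = 1 + (α₊ + α₋)/(ηW) + β₊(β₋ − β₊)/(η²W²)`. -/
noncomputable def Df (κ η f : ℝ) (z : ℂ) : ℂ :=
  1 + (alphaP κ f z + alphaM κ f z) / (η * Wf f)
    + betaP κ f z * (betaM κ f z - betaP κ f z) / (η ^ 2 * (Wf f) ^ 2)

section Moments

open MeasureTheory Set Filter Topology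

lemma integrableOn_pow_mul_exp_neg_mul_pow (n : ℕ) {m : ℕ} (hm : 0 < m) {δ : ℝ} (hδ : 0 < δ) :
    IntegrableOn (fun u : ℝ => u ^ n * Real.exp (-δ * u ^ m)) (Ioi 0) := by
  have h := integrableOn_rpow_mul_exp_neg_mul_rpow (p := m) (s := n) (b := δ)
    (lt_of_lt_of_le (by norm_num) (Nat.cast_nonneg n)) (by exact_mod_cast hm) hδ
  refine h.congr_fun (fun u _ => ?_) measurableSet_Ioi
  simp [Real.rpow_natCast]

lemma exists_quadratic_le_cubic (A B : ℝ) {δ : ℝ} (hδ : 0 < δ) :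
    ∃ K : ℝ, ∀ u : ℝ, 0 ≤ u → A * u + B * u ^ 2 - δ * u ^ 3 ≤ K - δ / 2 * u ^ 3 := by
  refine ⟨|A| * (2 * (|A| + |B|) / δ + 1) + |B| * (2 * (|A| + |B|) / δ + 1) ^ 2, fun u hu => ?_⟩
  set v := 2 * (|A| + |B|) / δ + 1 with hv
  have hv0 : 0 ≤ 2 * (|A| + |B|) / δ := by positivity
  have hA : A * u ≤ |A| * u := by gcongr; exact le_abs_self A
  have hB : B * u ^ 2 ≤ |B| * u ^ 2 := by gcongr; exact le_abs_self B
  have hA0 := abs_nonneg A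
  have hB0 := abs_nonneg B
  rcases le_total u v with h | h
  · have h1 : |A| * u ≤ |A| * v := by gcongr
    have h2 : |B| * u ^ 2 ≤ |B| * v ^ 2 := by gcongr
    have h3 : 0 ≤ δ / 2 * u ^ 3 := by positivity
    linarith
  · have hu1 : 1 ≤ u := by linarith
    have h1 : |A| * u ≤ |A| * u ^ 2 := by
      gcongr; nlinarith
    have h2 : (|A| + |B|) * u ^ 2 ≤ δ / 2 * u ^ 3 := by
      have : |A| + |B| ≤ δ / 2 * u := by
        have h4 : 2 * (|A| + |B|) / δ ≤ u := by linarith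
        rw [div_le_iff₀ hδ] at h4
        linarith
      calc (|A| + |B|) * u ^ 2 ≤ (δ / 2 * u) * u ^ 2 := by gcongr
        _ = _ := by ring
    have h3 : 0 ≤ |A| * v + |B| * v ^ 2 := by
      have : 0 ≤ v := by linarith
      positivity
    linarith

lemma integrableOn_pow_mul_exp_cubic (n : ℕ) (A B : ℝ) {δ : ℝ} (hδ : 0 < δ) :
    IntegrableOn (fun u : ℝ => u ^ n * Real.exp (A * u + B * u ^ 2 - δ * u ^ 3)) (Ioi 0) := by
  obtain ⟨K, hK⟩ := exists_quadratic_le_cubic A B hδ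
  refine Integrable.mono' ((integrableOn_pow_mul_exp_neg_mul_pow n (m := 3) (by norm_num)
    (half_pos hδ)).const_mul (Real.exp K)) (by fun_prop) ?_
  refine (ae_restrict_iff' measurableSet_Ioi).2 (Eventually.of_forall fun u hu => ?_)
  have hu0 : (0 : ℝ) < u := hu
  rw [Real.norm_of_nonneg (by positivity), mul_left_comm, ← Real.exp_add]
  gcongr
  have := hK u hu0.le
  linarith

/-- `∫₀^∞ uᵏ exp(-e^β uᵐ) du`. -/
noncomputable def expMoment (k m : ℕ) (β : ℂ) : ℂ :=
  ∫ u in Ioi (0 : ℝ), (u : ℂ) ^ k * Complex.exp (-Complex.exp β * (u : ℂ) ^ m)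

lemma norm_pow_mul_exp_neg_mul_pow (k m : ℕ) (b : ℂ) {u : ℝ} (hu : 0 < u) :
    ‖(u : ℂ) ^ k * Complex.exp (-b * (u : ℂ) ^ m)‖ = u ^ k * Real.exp (-b.re * u ^ m) := by
  rw [norm_mul, norm_pow, Complex.norm_of_nonneg hu.le, Complex.norm_exp]
  congr 2
  rw [← Complex.ofReal_pow, Complex.re_mul_ofReal, Complex.neg_re]

lemma integrableOn_pow_mul_cexp_neg_mul_pow (k : ℕ) {m : ℕ} (hm : 0 < m) {b : ℂ} (hb : 0 < b.re) :
    IntegrableOn (fun u : ℝ => (u : ℂ) ^ k * Complex.exp (-b * (u : ℂ) ^ m)) (Ioi 0) := by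
  refine Integrable.mono' (integrableOn_pow_mul_exp_neg_mul_pow k hm hb) (by fun_prop) ?_
  refine (ae_restrict_iff' measurableSet_Ioi).2 (Eventually.of_forall fun u hu => ?_)
  rw [norm_pow_mul_exp_neg_mul_pow k m b hu]

lemma tendsto_pow_mul_cexp_neg_mul_pow (k : ℕ) {m : ℕ} (hm : 0 < m) {b : ℂ} (hb : 0 < b.re) :
    Tendsto (fun u : ℝ => (u : ℂ) ^ k * Complex.exp (-b * (u : ℂ) ^ m)) atTop (𝓝 0) := by
  rw [tendsto_zero_iff_norm_tendsto_zero]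
  have h1 : Tendsto (fun u : ℝ => u ^ k * Real.exp (-b.re * u)) atTop (𝓝 0) := by
    have := tendsto_rpow_mul_exp_neg_mul_atTop_nhds_zero (k : ℝ) b.re hb
    simpa [Real.rpow_natCast] using this
  refine squeeze_zero' (Eventually.of_forall fun u => norm_nonneg _) ?_ h1
  filter_upwards [eventually_ge_atTop 1] with u hu
  rw [norm_pow_mul_exp_neg_mul_pow k m b (by linarith)]
  have : u ≤ u ^ m := le_self_pow₀ hu hm.ne'
  have h0 : (0 : ℝ) ≤ u ^ k := by positivity
  refine mul_le_mul_of_nonneg_left (Real.exp_le_exp.2 ?_) h0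
  nlinarith

lemma integral_pow_add_mul_cexp (k : ℕ) {m : ℕ} (hm : 0 < m) {b : ℂ} (hb : 0 < b.re) :
    ∫ u in Ioi (0 : ℝ), -b * (u : ℂ) ^ (k + m) * Complex.exp (-b * (u : ℂ) ^ m) =
      -((k + 1 : ℕ) / m : ℂ) * ∫ u in Ioi (0 : ℝ), (u : ℂ) ^ k * Complex.exp (-b * (u : ℂ) ^ m) := by
  have hi1 := (integrableOn_pow_mul_cexp_neg_mul_pow k hm hb).const_mul ((k + 1 : ℕ) : ℂ)
  have hi2 := (integrableOn_pow_mul_cexp_neg_mul_pow (k + m) hm hb).const_mul (-b * m)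
  have h := integral_Ioi_of_hasDerivAt_of_tendsto' (a := (0 : ℝ))
    (f := fun u : ℝ => (u : ℂ) ^ (k + 1) * Complex.exp (-b * (u : ℂ) ^ m))
    (f' := fun u : ℝ => ((k + 1 : ℕ) : ℂ) * ((u : ℂ) ^ k * Complex.exp (-b * (u : ℂ) ^ m)) +
      -b * m * ((u : ℂ) ^ (k + m) * Complex.exp (-b * (u : ℂ) ^ m))) (m := 0)
    (fun u _ => ?_) (hi1.add hi2) (tendsto_pow_mul_cexp_neg_mul_pow (k + 1) hm hb)
  · rw [integral_add hi1 hi2, integral_const_mul, integral_const_mul] at h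
    simp_rw [mul_assoc (-b)]
    rw [integral_const_mul]
    have hm' : (m : ℂ) ≠ 0 := by exact_mod_cast hm.ne'
    simp only [Complex.ofReal_zero, ne_eq, Nat.add_eq_zero_iff, one_ne_zero, and_false,
      not_false_eq_true, zero_pow, zero_mul, sub_zero] at h
    rw [← mul_right_inj' hm', ← mul_assoc (m : ℂ) (-(_ / _)), mul_neg, mul_div_cancel₀ _ hm']
    linear_combination h
  · have h1 : HasDerivAt (fun u : ℝ => (u : ℂ)) 1 u := Complex.ofRealCLM.hasDerivAt
    refine ((h1.pow (k + 1)).mul (((h1.pow m).const_mul (-b)).cexp)).congr_deriv ?_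
    obtain ⟨m, rfl⟩ : ∃ l, m = l + 1 := ⟨m - 1, by omega⟩
    simp only [Nat.add_sub_cancel, Pi.pow_apply]
    push_cast
    ring

lemma hasDerivAt_expMoment (k : ℕ) {m : ℕ} (hm : 0 < m) {β : ℂ} (hβ : 0 < (Complex.exp β).re) :
    HasDerivAt (expMoment k m) (-((k + 1 : ℕ) / m : ℂ) * expMoment k m β) β := by
  set δ := (Complex.exp β).re / 2 with hδ
  have hδ0 : 0 < δ := by positivity
  set s : Set ℂ := {γ | δ < (Complex.exp γ).re ∧ ‖Complex.exp γ‖ < ‖Complex.exp β‖ + 1} with hs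
  have hso : s ∈ 𝓝 β := by
    refine IsOpen.mem_nhds ?_ ⟨by linarith, by linarith⟩
    exact (isOpen_lt continuous_const (Complex.continuous_re.comp Complex.continuous_exp)).inter
      (isOpen_lt Complex.continuous_exp.norm continuous_const)
  have key := hasDerivAt_integral_of_dominated_loc_of_deriv_le (𝕜 := ℂ)
    (μ := volume.restrict (Ioi (0 : ℝ))) (x₀ := β) (s := s)
    (F := fun γ (u : ℝ) => (u : ℂ) ^ k * Complex.exp (-Complex.exp γ * (u : ℂ) ^ m))
    (F' := fun γ (u : ℝ) => -Complex.exp γ * (u : ℂ) ^ (k + m) *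
      Complex.exp (-Complex.exp γ * (u : ℂ) ^ m))
    (bound := fun u => (‖Complex.exp β‖ + 1) * (u ^ (k + m) * Real.exp (-δ * u ^ m)))
    hso (Eventually.of_forall fun γ => by fun_prop)
    (integrableOn_pow_mul_cexp_neg_mul_pow k hm hβ) (by fun_prop) ?_
    ((integrableOn_pow_mul_exp_neg_mul_pow (k + m) hm hδ0).const_mul _) ?_
  · have h := key.2
    rw [integral_pow_add_mul_cexp k hm hβ] at h
    exact h
  · refine (ae_restrict_iff' measurableSet_Ioi).2 (Eventually.of_forall fun u hu γ hγ => ?_)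
    have hu0 : (0 : ℝ) < u := hu
    rw [mul_assoc, norm_mul, norm_neg, norm_pow_mul_exp_neg_mul_pow _ m _ hu0]
    gcongr
    · exact hγ.2.le
    · exact hγ.1.le
  · refine Eventually.of_forall fun u γ _ => ?_
    refine (((((Complex.hasDerivAt_exp γ).neg.mul_const ((u : ℂ) ^ m))).cexp).const_mul
      ((u : ℂ) ^ k)).congr_deriv ?_
    simp only [Pi.neg_apply]
    ring

lemma expMoment_zero (k : ℕ) {m : ℕ} (hm : 0 < m) :
    expMoment k m 0 = (1 / m : ℂ) * Complex.Gamma ((k + 1 : ℕ) / m) := by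
  have h := integral_rpow_mul_exp_neg_mul_rpow (p := m) (q := k) (b := 1)
    (by exact_mod_cast hm) (lt_of_lt_of_le (by norm_num) (Nat.cast_nonneg k)) one_pos
  have h2 : expMoment k m 0 =
      ((∫ u in Ioi (0 : ℝ), u ^ (k : ℝ) * Real.exp (-1 * u ^ (m : ℝ)) : ℝ) : ℂ) := by
    rw [expMoment, ← integral_complex_ofReal]
    refine setIntegral_congr_fun measurableSet_Ioi fun u _ => ?_
    simp [Real.rpow_natCast]
  rw [h2, h, Real.one_rpow, one_mul]
  push_cast [← Complex.Gamma_ofReal]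
  rfl

theorem expMoment_eq (k : ℕ) {m : ℕ} (hm : 0 < m) {β : ℂ} (hβ : |β.im| < π / 2) :
    expMoment k m β =
      (1 / m : ℂ) * Complex.exp (-β * ((k + 1 : ℕ) / m)) * Complex.Gamma ((k + 1 : ℕ) / m) := by
  set S : Set ℂ := {γ | |γ.im| < π / 2} with hS
  have hSe : S = Complex.im ⁻¹' (Ioo (-(π / 2)) (π / 2)) := by
    ext γ; simp [hS, abs_lt]
  have hSo : IsOpen S := by rw [hSe]; exact isOpen_Ioo.preimage Complex.continuous_im
  have hSc : IsPreconnected S := by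
    rw [hSe]
    exact ((convex_Ioo _ _).linear_preimage Complex.imLm).isPreconnected
  have hre : ∀ γ ∈ S, 0 < (Complex.exp γ).re := fun γ hγ => by
    rw [Complex.exp_re]
    have := abs_lt.1 (show |γ.im| < π / 2 from hγ)
    exact mul_pos (Real.exp_pos _) (Real.cos_pos_of_mem_Ioo ⟨by linarith, by linarith⟩)
  set c : ℂ := ((k + 1 : ℕ) / m : ℂ) with hc
  have hder : ∀ γ ∈ S, HasDerivAt (fun γ => expMoment k m γ * Complex.exp (γ * c)) 0 γ := by
    intro γ hγ
    refine ((hasDerivAt_expMoment k hm (hre γ hγ)).mul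
      (((hasDerivAt_id γ).mul_const c).cexp)).congr_deriv ?_
    simp only [id, ← hc]
    ring
  have hconst := hSo.is_const_of_deriv_eq_zero hSc
    (fun γ hγ => (hder γ hγ).differentiableAt.differentiableWithinAt)
    (fun γ hγ => (hder γ hγ).deriv) (show β ∈ S from hβ)
    (show (0 : ℂ) ∈ S by simp [hS, Real.pi_pos])
  simp only [zero_mul, Complex.exp_zero, mul_one, expMoment_zero k hm] at hconst
  rw [neg_mul, Complex.exp_neg]
  rw [← hc] at hconst
  have he := Complex.exp_ne_zero (β * c)
  field_simp
  rw [hconst]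
  ring

end Moments

section AiryIntegral

open MeasureTheory Set Filter Topology

/-- The integral of `exp(t³/3 - x t)` along the ray issuing from `c` in the direction `d`. -/
noncomputable def airyRay (d x c : ℂ) : ℂ :=
  ∫ u in Ioi (0 : ℝ), d * Complex.exp ((c + d * u) ^ 3 / 3 - x * (c + d * u))

lemma norm_airyRay_integrand_le {d : ℂ} (hd : ‖d‖ = 1) (x : ℂ) {c : ℂ} {R : ℝ} (hc : ‖c‖ ≤ R)
    {u : ℝ} (hu : 0 ≤ u) :
    ‖Complex.exp ((c + d * u) ^ 3 / 3 - x * (c + d * u))‖ ≤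
      Real.exp (R ^ 3 + ‖x‖ * R) *
        Real.exp ((R ^ 2 + ‖x‖) * u + R * u ^ 2 - -(d ^ 3).re / 3 * u ^ 3) := by
  rw [Complex.norm_exp, ← Real.exp_add]
  refine Real.exp_le_exp.2 ?_
  have hR : 0 ≤ R := (norm_nonneg c).trans hc
  have e : (c + d * u) ^ 3 / 3 - x * (c + d * u) =
      (c ^ 3 / 3 - x * c) + (c ^ 2 * d - x * d) * u + c * d ^ 2 * u ^ 2 + d ^ 3 / 3 * u ^ 3 := by
    ring
  have h1 : (c ^ 3 / 3 - x * c).re ≤ R ^ 3 + ‖x‖ * R := by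
    refine (Complex.re_le_norm _).trans ((norm_sub_le _ _).trans ?_)
    rw [norm_div, norm_pow, norm_mul, Complex.norm_ofNat]
    have : ‖c‖ ^ 3 / 3 ≤ R ^ 3 := by
      have : ‖c‖ ^ 3 ≤ R ^ 3 := by gcongr
      have : 0 ≤ ‖c‖ ^ 3 := by positivity
      linarith
    gcongr
  have h2 : (c ^ 2 * d - x * d).re ≤ R ^ 2 + ‖x‖ := by
    refine (Complex.re_le_norm _).trans ((norm_sub_le _ _).trans ?_)
    rw [norm_mul, norm_mul, norm_pow, hd, mul_one, mul_one]
    gcongr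
  have h3 : (c * d ^ 2).re ≤ R := by
    refine (Complex.re_le_norm _).trans ?_
    rw [norm_mul, norm_pow, hd, one_pow, mul_one]
    exact hc
  have h4 : (d ^ 3 / 3).re = (d ^ 3).re / 3 := by
    simp
  rw [e, ← Complex.ofReal_pow, ← Complex.ofReal_pow]
  simp only [Complex.add_re, Complex.re_mul_ofReal]
  rw [h4]
  have := mul_le_mul_of_nonneg_right h2 hu
  have := mul_le_mul_of_nonneg_right h3 (sq_nonneg u)
  linarith

lemma integrableOn_airyRay {d : ℂ} (hd : ‖d‖ = 1) (hd3 : (d ^ 3).re < 0) (x c : ℂ) :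
    IntegrableOn (fun u : ℝ => Complex.exp ((c + d * u) ^ 3 / 3 - x * (c + d * u))) (Ioi 0) := by
  refine Integrable.mono' ((integrableOn_pow_mul_exp_cubic 0 (‖c‖ ^ 2 + ‖x‖) ‖c‖
    (δ := -(d ^ 3).re / 3) (by linarith)).const_mul (Real.exp (‖c‖ ^ 3 + ‖x‖ * ‖c‖)))
    (by fun_prop) ?_
  refine (ae_restrict_iff' measurableSet_Ioi).2 (Eventually.of_forall fun u hu => ?_)
  have := norm_airyRay_integrand_le hd x le_rfl (c := c) (le_of_lt hu)
  simpa using this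

lemma tendsto_airyRay_integrand {d : ℂ} (hd : ‖d‖ = 1) (hd3 : (d ^ 3).re < 0) (x c : ℂ) :
    Tendsto (fun u : ℝ => Complex.exp ((c + d * u) ^ 3 / 3 - x * (c + d * u))) atTop (𝓝 0) := by
  rw [tendsto_zero_iff_norm_tendsto_zero]
  have hδ : 0 < -(d ^ 3).re / 3 := by linarith
  obtain ⟨K, hK⟩ := exists_quadratic_le_cubic (‖c‖ ^ 2 + ‖x‖) ‖c‖ hδ
  have h1 : Tendsto (fun u : ℝ => Real.exp (‖c‖ ^ 3 + ‖x‖ * ‖c‖) *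
      Real.exp (K - -(d ^ 3).re / 3 / 2 * u ^ 3)) atTop (𝓝 0) := by
    rw [← mul_zero (Real.exp (‖c‖ ^ 3 + ‖x‖ * ‖c‖))]
    refine Tendsto.const_mul _ (Real.tendsto_exp_atBot.comp ?_)
    refine tendsto_atBot_add_const_left _ K (tendsto_neg_atTop_atBot.comp ?_)
    exact (tendsto_pow_atTop (by norm_num)).const_mul_atTop (half_pos hδ)
  refine squeeze_zero' (Eventually.of_forall fun u => norm_nonneg _) ?_ h1
  filter_upwards [eventually_ge_atTop 0] with u hu
  refine (norm_airyRay_integrand_le hd x le_rfl hu).trans ?_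
  exact mul_le_mul_of_nonneg_left (Real.exp_le_exp.2 (hK u hu)) (Real.exp_pos _).le

lemma hasDerivAt_airyRay {d : ℂ} (hd : ‖d‖ = 1) (hd3 : (d ^ 3).re < 0) (x c : ℂ) :
    HasDerivAt (airyRay d x) (-Complex.exp (c ^ 3 / 3 - x * c)) c := by
  have hδ : 0 < -(d ^ 3).re / 3 := by linarith
  set R := ‖c‖ + 1 with hR
  set F' : ℂ → ℝ → ℂ := fun c u => d * (Complex.exp ((c + d * u) ^ 3 / 3 - x * (c + d * u)) *
      ((c + d * u) ^ 2 - x)) with hF'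
  set E : ℝ → ℝ := fun u => Real.exp ((R ^ 2 + ‖x‖) * u + R * u ^ 2 - -(d ^ 3).re / 3 * u ^ 3)
    with hE
  have hR0 : 0 ≤ R := by positivity
  have key := hasDerivAt_integral_of_dominated_loc_of_deriv_le (𝕜 := ℂ)
    (μ := volume.restrict (Ioi (0 : ℝ))) (x₀ := c) (s := Metric.ball c 1)
    (F := fun c (u : ℝ) => d * Complex.exp ((c + d * u) ^ 3 / 3 - x * (c + d * u)))
    (F' := F')
    (bound := fun u => Real.exp (R ^ 3 + ‖x‖ * R) *
      ((R ^ 2 + ‖x‖) * (u ^ 0 * E u) + 2 * R * (u ^ 1 * E u) + u ^ 2 * E u))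
    (Metric.ball_mem_nhds c one_pos) (Eventually.of_forall fun γ => by fun_prop)
    ((integrableOn_airyRay hd hd3 x c).const_mul d) (by fun_prop) ?_ ?_ ?_
  · have h := integral_Ioi_of_hasDerivAt_of_tendsto' (a := (0 : ℝ))
      (f := fun u : ℝ => Complex.exp ((c + d * u) ^ 3 / 3 - x * (c + d * u)))
      (f' := F' c) (m := 0) (fun u _ => ?_) key.1 (tendsto_airyRay_integrand hd hd3 x c)
    · have h2 := key.2
      rw [h] at h2
      refine HasDerivAt.congr_deriv h2 ?_
      simp
    · have h1 : HasDerivAt (fun u : ℝ => c + d * (u : ℂ)) (d * 1) u :=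
        (Complex.ofRealCLM.hasDerivAt.const_mul d).const_add c
      refine ((((h1.pow 3).div_const 3).sub (h1.const_mul x)).cexp).congr_deriv ?_
      simp only [hF', Pi.pow_apply, Pi.sub_apply]
      push_cast
      ring
  · refine (ae_restrict_iff' measurableSet_Ioi).2 (Eventually.of_forall fun u hu γ hγ => ?_)
    have hu0 : (0 : ℝ) < u := hu
    have hγR : ‖γ‖ ≤ R := by
      have h1 : ‖γ - c‖ < 1 := by simpa [dist_eq_norm] using hγ
      have h2 := norm_add_le (γ - c) c
      rw [sub_add_cancel] at h2
      linarith
    have h1 := norm_airyRay_integrand_le hd x hγR hu0.le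
    have h2 : ‖(γ + d * u) ^ 2 - x‖ ≤ (R + u) ^ 2 + ‖x‖ := by
      refine (norm_sub_le _ _).trans ?_
      rw [norm_pow]
      have : ‖γ + d * u‖ ≤ R + u := by
        refine (norm_add_le _ _).trans ?_
        rw [norm_mul, hd, Complex.norm_of_nonneg hu0.le, one_mul]
        linarith
      gcongr
    rw [hF', norm_mul, hd, one_mul, norm_mul]
    refine (mul_le_mul h1 h2 (norm_nonneg _) (by positivity)).trans (le_of_eq ?_)
    rw [hE]
    ring
  · have hi := fun n => integrableOn_pow_mul_exp_cubic n (R ^ 2 + ‖x‖) R hδ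
    exact ((((hi 0).const_mul _).add ((hi 1).const_mul _)).add (hi 2)).const_mul _
  · refine Eventually.of_forall fun u γ _ => ?_
    have h1 : HasDerivAt (fun γ : ℂ => γ + d * (u : ℂ)) 1 γ := (hasDerivAt_id γ).add_const _
    refine (((((h1.pow 3).div_const 3).sub (h1.const_mul x)).cexp).const_mul d).congr_deriv ?_
    simp only [hF', Pi.pow_apply, Pi.sub_apply]
    push_cast
    ring

lemma airyRay_sub_eq {d e : ℂ} (hd : ‖d‖ = 1) (hd3 : (d ^ 3).re < 0) (he : ‖e‖ = 1)
    (he3 : (e ^ 3).re < 0) (x c : ℂ) :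
    airyRay d x c - airyRay e x c = airyRay d x 0 - airyRay e x 0 := by
  have h : ∀ c, HasDerivAt (fun c => airyRay d x c - airyRay e x c) 0 c := fun c =>
    ((hasDerivAt_airyRay hd hd3 x c).sub (hasDerivAt_airyRay he he3 x c)).congr_deriv (by ring)
  exact is_const_of_deriv_eq_zero (fun c => (h c).differentiableAt) (fun c => (h c).deriv) c 0

lemma hasSum_airyRay_zero {d : ℂ} (hd : ‖d‖ = 1) (hd3 : (d ^ 3).re < 0) (x : ℂ) :
    HasSum (fun k : ℕ => (-x) ^ k / (k.factorial : ℂ) * d ^ (k + 1) *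
      ∫ u in Ioi (0 : ℝ), (u : ℂ) ^ k * Complex.exp (d ^ 3 / 3 * (u : ℂ) ^ 3)) (airyRay d x 0) := by
  have hδ : 0 < -(d ^ 3).re / 3 := by linarith
  have hnorm : ∀ u : ℝ, ‖Complex.exp (d ^ 3 / 3 * (u : ℂ) ^ 3)‖ =
      Real.exp (-(-(d ^ 3).re / 3) * u ^ 3) := fun u => by
    rw [Complex.norm_exp, ← Complex.ofReal_pow, Complex.re_mul_ofReal]
    have h4 : (d ^ 3 / 3).re = (d ^ 3).re / 3 := by
      simp
    rw [h4]
    ring_nf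
  have hsum : ∀ u : ℝ, HasSum (fun k : ℕ => (‖x‖ * u) ^ k / k.factorial *
      Real.exp (-(-(d ^ 3).re / 3) * u ^ 3))
      (u ^ 0 * Real.exp (‖x‖ * u + 0 * u ^ 2 - -(d ^ 3).re / 3 * u ^ 3)) := fun u => by
    have h := (NormedSpace.expSeries_div_hasSum_exp (‖x‖ * u)).mul_right
      (Real.exp (-(-(d ^ 3).re / 3) * u ^ 3))
    rw [← Real.exp_eq_exp_ℝ, ← Real.exp_add] at h
    convert! h using 1
    rw [pow_zero, one_mul]
    ring_nf
  have key := hasSum_integral_of_dominated_convergence (μ := volume.restrict (Ioi (0 : ℝ)))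
    (F := fun (k : ℕ) (u : ℝ) => (-x) ^ k / (k.factorial : ℂ) * d ^ (k + 1) *
      ((u : ℂ) ^ k * Complex.exp (d ^ 3 / 3 * (u : ℂ) ^ 3)))
    (f := fun u : ℝ => d * Complex.exp ((0 + d * u) ^ 3 / 3 - x * (0 + d * u)))
    (fun k u => (‖x‖ * u) ^ k / k.factorial * Real.exp (-(-(d ^ 3).re / 3) * u ^ 3))
    (fun k => by fun_prop) ?_ ?_ ?_ ?_
  · refine HasSum.congr_fun (f := fun k : ℕ => _) key fun k => ?_
    exact (integral_const_mul _ _).symm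
  · refine fun k => (ae_restrict_iff' measurableSet_Ioi).2 (Eventually.of_forall fun u hu => ?_)
    have hu0 : (0 : ℝ) < u := hu
    rw [norm_mul, norm_mul, norm_mul, hnorm, norm_div, norm_pow, norm_pow, norm_pow, norm_neg, hd,
      one_pow, Complex.norm_of_nonneg hu0.le, Complex.norm_natCast, mul_pow]
    exact le_of_eq (by ring)
  · exact Eventually.of_forall fun u => (hsum u).summable
  · simp_rw [(hsum _).tsum_eq]
    exact integrableOn_pow_mul_exp_cubic 0 ‖x‖ 0 hδ
  · refine Eventually.of_forall fun u => ?_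
    have h := (NormedSpace.expSeries_div_hasSum_exp (-x * (d * u))).mul_left
      (d * Complex.exp (d ^ 3 / 3 * (u : ℂ) ^ 3))
    rw [← Complex.exp_eq_exp_ℂ, mul_assoc, ← Complex.exp_add] at h
    convert! h using 1
    · funext k
      rw [mul_pow, mul_pow]
      ring
    · congr 2
      ring

/-- The directions `e^{±4πi/9}`, in which `exp(t³/3)` decays. -/
noncomputable def rayDir (ε : ℝ) : ℂ := Complex.exp ((ε * (4 * π / 9) : ℝ) * Complex.I)

lemma norm_rayDir (ε : ℝ) : ‖rayDir ε‖ = 1 := Complex.norm_exp_ofReal_mul_I _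

lemma rayDir_pow_three {ε : ℝ} (hε : ε = 1 ∨ ε = -1) :
    rayDir ε ^ 3 = -Complex.exp ((ε * (π / 3) : ℝ) * Complex.I) := by
  rw [rayDir, ← Complex.exp_nat_mul]
  have hpi : Complex.exp (ε * (π * Complex.I)) = -1 := by
    rcases hε with rfl | rfl
    · simp
    · simp [Complex.exp_neg]
  rw [neg_eq_neg_one_mul (Complex.exp ((ε * (π / 3) : ℝ) * _)), ← hpi, ← Complex.exp_add]
  push_cast
  ring_nf

lemma rayDir_pow_three_re {ε : ℝ} (hε : ε = 1 ∨ ε = -1) : (rayDir ε ^ 3).re = -(1 / 2) := by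
  rw [rayDir_pow_three hε, Complex.neg_re, Complex.exp_ofReal_mul_I_re]
  rcases hε with rfl | rfl
  · rw [one_mul, Real.cos_pi_div_three]
  · rw [neg_one_mul, Real.cos_neg, Real.cos_pi_div_three]

lemma rayDir_pow_mul_integral {ε : ℝ} (hε : ε = 1 ∨ ε = -1) (k : ℕ) :
    rayDir ε ^ (k + 1) *
      ∫ u in Ioi (0 : ℝ), (u : ℂ) ^ k * Complex.exp (rayDir ε ^ 3 / 3 * (u : ℂ) ^ 3) =
    1 / 3 * Complex.exp (Real.log 3 * ((k + 1 : ℕ) / 3)) * Complex.Gamma ((k + 1 : ℕ) / 3) *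
      Complex.exp (ε * (π * (k + 1 : ℕ) / 3) * Complex.I) := by
  set β : ℂ := ((ε * (π / 3) : ℝ) * Complex.I) - Real.log 3 with hβ
  have hexp : rayDir ε ^ 3 / 3 = -Complex.exp β := by
    rw [rayDir_pow_three hε, hβ, Complex.exp_sub, ← Complex.ofReal_exp,
      Real.exp_log (by norm_num)]
    push_cast
    ring
  have him : |β.im| < π / 2 := by
    have : β.im = ε * (π / 3) := by
      rw [hβ, Complex.sub_im, Complex.im_ofReal_mul, Complex.ofReal_im, Complex.I_im]; ring
    rw [this]
    have := Real.pi_pos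
    rcases hε with rfl | rfl <;> rw [abs_lt] <;> constructor <;> linarith
  have h := expMoment_eq k (m := 3) (by norm_num) him
  rw [expMoment, ← hexp] at h
  rw [h, rayDir, ← Complex.exp_nat_mul]
  have : ∀ a b c e f : ℂ, e * a = f → a * (1 / 3 * b * c) * e = 1 / 3 * (b * f) * c := by
    rintro a b c e f rfl; ring
  have e1 : Complex.exp (((k + 1 : ℕ) : ℂ) * ((ε * (4 * π / 9) : ℝ) * Complex.I)) *
      Complex.exp (-β * (((k + 1 : ℕ) : ℂ) / 3)) =
      Complex.exp (Real.log 3 * ((k + 1 : ℕ) / 3)) *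
      Complex.exp (ε * (π * (k + 1 : ℕ) / 3) * Complex.I) := by
    rw [← Complex.exp_add, ← Complex.exp_add, hβ]
    congr 1
    push_cast
    ring
  push_cast at e1 ⊢
  linear_combination (1 / 3 * Complex.Gamma (((k : ℂ) + 1) / 3)) * e1

lemma airyCoeff_eq : ∀ k : ℕ, airyCoeff k = (-1) ^ k / (k.factorial : ℂ) *
    (1 / (3 * π) * Complex.exp (Real.log 3 * ((k + 1 : ℕ) / 3)) *
      Complex.Gamma ((k + 1 : ℕ) / 3) * Complex.sin (π * (k + 1 : ℕ) / 3))
  | 0 => by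
    have hs : Complex.sin (π * (1 / 3)) ≠ 0 := by
      have : Complex.sin (π * (1 / 3)) = ((Real.sin (π / 3) : ℝ) : ℂ) := by
        push_cast; ring_nf
      rw [this, Real.sin_pi_div_three]
      exact_mod_cast (by positivity : √3 / 2 ≠ 0)
    have hG := Complex.Gamma_mul_Gamma_one_sub (1 / 3)
    have hG2 : Complex.Gamma (2 / 3) ≠ 0 := Complex.Gamma_ne_zero_of_re_pos (by norm_num)
    have h3 : (3 : ℂ) ^ (-(2 : ℂ) / 3) = 1 / 3 * Complex.exp (Real.log 3 * (1 / 3)) := by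
      have h3' : (1 / 3 : ℂ) = Complex.exp (-Real.log 3) := by
        rw [Complex.exp_neg, ← Complex.ofReal_exp, Real.exp_log (by norm_num)]; simp
      rw [h3', ← Complex.exp_add, Complex.cpow_def_of_ne_zero (by norm_num), ← h3',
        show Complex.log 3 = (Real.log 3 : ℂ) by rw [Complex.ofReal_log (by norm_num)]; simp]
      ring_nf
    rw [airyCoeff, h3]
    rw [show (1 : ℂ) - 1 / 3 = 2 / 3 by norm_num, eq_div_iff hs] at hG
    have hpi : (π : ℂ) ≠ 0 := by exact_mod_cast Real.pi_ne_zero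
    simp only [Nat.factorial, zero_add, Nat.cast_one, pow_zero]
    rw [mul_div_assoc (π : ℂ), div_eq_iff hG2]
    field_simp at hG ⊢
    linear_combination -hG
  | 1 => by
    have hs : Complex.sin (π * (2 / 3)) ≠ 0 := by
      have : Complex.sin (π * (2 / 3)) = ((Real.sin (π - π / 3) : ℝ) : ℂ) := by
        push_cast; ring_nf
      rw [this, Real.sin_pi_sub, Real.sin_pi_div_three]
      exact_mod_cast (by positivity : √3 / 2 ≠ 0)
    have hG := Complex.Gamma_mul_Gamma_one_sub (2 / 3)
    have hG2 : Complex.Gamma (1 / 3) ≠ 0 := Complex.Gamma_ne_zero_of_re_pos (by norm_num)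
    have h3 : (3 : ℂ) ^ (-(1 : ℂ) / 3) = 1 / 3 * Complex.exp (Real.log 3 * (2 / 3)) := by
      have h3' : (1 / 3 : ℂ) = Complex.exp (-Real.log 3) := by
        rw [Complex.exp_neg, ← Complex.ofReal_exp, Real.exp_log (by norm_num)]; simp
      rw [h3', ← Complex.exp_add, Complex.cpow_def_of_ne_zero (by norm_num),
        show Complex.log 3 = (Real.log 3 : ℂ) by rw [Complex.ofReal_log (by norm_num)]; simp]
      ring_nf
    rw [airyCoeff, h3]
    rw [show (1 : ℂ) - 2 / 3 = 1 / 3 by norm_num, eq_div_iff hs] at hG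
    have hpi : (π : ℂ) ≠ 0 := by exact_mod_cast Real.pi_ne_zero
    simp only [Nat.factorial, Nat.reduceAdd, Nat.cast_ofNat, pow_one]
    rw [mul_div_assoc (π : ℂ), neg_eq_iff_eq_neg, div_eq_iff hG2]
    norm_num
    field_simp at hG ⊢
    linear_combination -hG
  | 2 => by
    have : (π * ((2 + 1 : ℕ) : ℂ) / 3) = π := by push_cast; ring
    rw [this, Complex.sin_pi, airyCoeff]
    simp
  | (k + 3) => by
    rw [airyCoeff, airyCoeff_eq k]
    have hpi : (π : ℂ) ≠ 0 := by exact_mod_cast Real.pi_ne_zero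
    have hk1 : ((k : ℂ) + 1) ≠ 0 := by exact_mod_cast Nat.succ_ne_zero k
    have hk2 : ((k : ℂ) + 2) ≠ 0 := by exact_mod_cast Nat.succ_ne_zero (k + 1)
    have hk3 : ((k : ℂ) + 3) ≠ 0 := by exact_mod_cast Nat.succ_ne_zero (k + 2)
    have hf : (k.factorial : ℂ) ≠ 0 := by exact_mod_cast k.factorial_ne_zero
    have hG : Complex.Gamma ((k + 3 + 1 : ℕ) / 3) =
        ((k + 1 : ℕ) / 3) * Complex.Gamma ((k + 1 : ℕ) / 3) := by
      rw [← Complex.Gamma_add_one _ (by push_cast; exact div_ne_zero hk1 (by norm_num))]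
      congr 1
      push_cast
      ring
    have hE : Complex.exp (Real.log 3 * ((k + 3 + 1 : ℕ) / 3)) =
        3 * Complex.exp (Real.log 3 * ((k + 1 : ℕ) / 3)) := by
      have h3' : (3 : ℂ) = Complex.exp (Real.log 3) := by
        rw [← Complex.ofReal_exp, Real.exp_log (by norm_num)]; simp
      nth_rewrite 2 [h3']
      rw [← Complex.exp_add]
      congr 1
      push_cast
      ring
    have hS : Complex.sin (π * (k + 3 + 1 : ℕ) / 3) = -Complex.sin (π * (k + 1 : ℕ) / 3) := by
      rw [← Complex.sin_add_pi]
      congr 1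
      push_cast
      ring
    rw [hG, hE, hS, show (k + 3).factorial = (k + 3) * ((k + 2) * ((k + 1) * k.factorial)) by
      simp [Nat.factorial]]
    push_cast
    field_simp
    ring

theorem hasSum_airy (x : ℂ) : HasSum (fun k => airyCoeff k * x ^ k)
    ((airyRay (rayDir 1) x 0 - airyRay (rayDir (-1)) x 0) / (2 * π * Complex.I)) := by
  have h1 := hasSum_airyRay_zero (norm_rayDir 1) (by rw [rayDir_pow_three_re (.inl rfl)]; norm_num) x
  have h2 := hasSum_airyRay_zero (norm_rayDir (-1))
    (by rw [rayDir_pow_three_re (.inr rfl)]; norm_num) x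
  have h := (h1.sub h2).div_const (2 * π * Complex.I)
  convert! h using 1
  funext k
  have hpi : (π : ℂ) ≠ 0 := by exact_mod_cast Real.pi_ne_zero
  rw [mul_assoc, mul_assoc, rayDir_pow_mul_integral (.inl rfl), rayDir_pow_mul_integral (.inr rfl),
    airyCoeff_eq, Complex.sin]
  have hf : (k.factorial : ℂ) ≠ 0 := by exact_mod_cast k.factorial_ne_zero
  rw [neg_pow x]
  push_cast
  rw [one_mul, neg_mul, neg_mul, neg_mul, one_mul]
  field_simp
  rw [Complex.I_sq]
  ring

theorem Ai_eq_airyRay (x c : ℂ) :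
    Ai x = (airyRay (rayDir 1) x c - airyRay (rayDir (-1)) x c) / (2 * π * Complex.I) := by
  rw [airyRay_sub_eq (norm_rayDir 1) (by rw [rayDir_pow_three_re (.inl rfl)]; norm_num)
    (norm_rayDir (-1)) (by rw [rayDir_pow_three_re (.inr rfl)]; norm_num)]
  exact (hasSum_airy x).tsum_eq

/-- The connection formula between the three rotated Airy functions. -/
theorem Ai_connection (x : ℂ) : Ai x + ωc * Ai (ωc * x) + ωc ^ 2 * Ai (ωc ^ 2 * x) = 0 := by
  have hs := fun y => (hasSum_airy y).summable
  have hω : ωc ^ 3 = 1 := by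
    rw [ωc, ← Complex.exp_nat_mul]
    convert Complex.exp_two_pi_mul_I using 2
    push_cast; ring
  have hω1 : 1 + ωc + ωc ^ 2 = 0 := by
    have hne : ωc ≠ 1 := by
      intro h
      have h2 := congrArg Complex.re h
      rw [ωc, show (2 * π * Complex.I / 3 : ℂ) = ((2 * π / 3 : ℝ) : ℂ) * Complex.I by
        push_cast; ring, Complex.exp_ofReal_mul_I_re, Complex.one_re,
        show 2 * π / 3 = π - π / 3 by ring, Real.cos_pi_sub, Real.cos_pi_div_three] at h2
      norm_num at h2
    have : (ωc - 1) * (1 + ωc + ωc ^ 2) = 0 := by linear_combination hω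
    exact (mul_eq_zero.1 this).resolve_left (sub_ne_zero.2 hne)
  have h := (((hs x).hasSum.add ((hs (ωc * x)).hasSum.mul_left ωc)).add
    ((hs (ωc ^ 2 * x)).hasSum.mul_left (ωc ^ 2)))
  refine h.unique ?_
  convert! hasSum_zero using 1
  funext k
  have hfac : airyCoeff k * (1 + ωc ^ (k + 1) + (ωc ^ (k + 1)) ^ 2) = 0 := by
    obtain ⟨q, hq | hq | hq⟩ : ∃ q, k = 3 * q ∨ k = 3 * q + 1 ∨ k = 3 * q + 2 :=
      ⟨k / 3, by omega⟩
    · rw [hq, pow_succ ωc (3 * q), pow_mul, hω, one_pow, one_mul, hω1, mul_zero]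
    · rw [hq, show 3 * q + 1 + 1 = 3 * q + 2 by ring, pow_add, pow_mul, hω, one_pow, one_mul]
      linear_combination airyCoeff (3 * q + 1) * (hω1 + ωc * hω)
    · rw [airyCoeff_eq, show (π * ((k + 1 : ℕ) : ℂ) / 3) = ((q + 1 : ℕ) : ℂ) * π by
        rw [hq]; push_cast; ring, Complex.sin_nat_mul_pi]
      ring
  linear_combination x ^ k * hfac

end AiryIntegral

section AiryAsymptotics

open MeasureTheory Set Filter Topology

lemma hasDerivAt_sum_pow_div_factorial (n : ℕ) (z : ℂ) :
    HasDerivAt (fun z : ℂ => ∑ j ∈ Finset.range (n + 1), z ^ j / (j.factorial : ℂ))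
      (∑ j ∈ Finset.range n, z ^ j / (j.factorial : ℂ)) z := by
  have h := HasDerivAt.fun_sum (u := Finset.range (n + 1)) (x := z)
    (A := fun j (z : ℂ) => z ^ j / (j.factorial : ℂ))
    (A' := fun j => (j : ℂ) * z ^ (j - 1) / (j.factorial : ℂ))
    (fun j _ => (hasDerivAt_pow j z).div_const _)
  refine h.congr_deriv ?_
  rw [Finset.sum_range_succ']
  simp only [Nat.cast_zero, zero_mul, zero_div, add_zero, Nat.add_sub_cancel]
  refine Finset.sum_congr rfl fun j _ => ?_
  have h1 : ((j : ℂ) + 1) ≠ 0 := by exact_mod_cast Nat.succ_ne_zero j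
  rw [Nat.factorial_succ]
  push_cast
  rw [mul_div_mul_left _ _ h1]

lemma norm_exp_sub_sum_le_of_re_nonpos (n : ℕ) : ∀ z : ℂ, z.re ≤ 0 →
    ‖Complex.exp z - ∑ j ∈ Finset.range n, z ^ j / (j.factorial : ℂ)‖ ≤ ‖z‖ ^ n := by
  induction n with
  | zero =>
    intro z hz
    simpa [Complex.norm_exp] using hz
  | succ n ih =>
    intro z hz
    have hconv : Convex ℝ ({w : ℂ | w.re ≤ 0} ∩ Metric.closedBall 0 ‖z‖) :=
      ((convex_Iic (0 : ℝ)).linear_preimage Complex.reLm).inter (convex_closedBall _ _)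
    have h := hconv.norm_image_sub_le_of_norm_hasDerivWithin_le (x := 0) (y := z) (C := ‖z‖ ^ n)
      (f := fun z => Complex.exp z - ∑ j ∈ Finset.range (n + 1), z ^ j / (j.factorial : ℂ))
      (f' := fun z => Complex.exp z - ∑ j ∈ Finset.range n, z ^ j / (j.factorial : ℂ))
      (fun w _ => ((Complex.hasDerivAt_exp w).sub
        (hasDerivAt_sum_pow_div_factorial n w)).hasDerivWithinAt)
      (fun w hw => (ih w hw.1).trans (by
        have : ‖w‖ ≤ ‖z‖ := by simpa using hw.2
        gcongr)) ⟨by simp, by simp⟩ ⟨hz, by simp⟩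
    have h0 : ∑ j ∈ Finset.range (n + 1), (0 : ℂ) ^ j / (j.factorial : ℂ) = 1 := by
      rw [Finset.sum_range_succ']
      simp
    rw [h0, Complex.exp_zero, sub_self, sub_zero, sub_zero] at h
    rw [pow_succ]
    exact h

lemma rayDir_sq_mul_exp {ε : ℝ} (hε : ε = 1 ∨ ε = -1) (ℓ : ℂ) :
    Complex.exp ℓ * rayDir ε ^ 2 = -Complex.exp (ℓ - (ε * (π / 9) : ℝ) * Complex.I) := by
  have hpi : Complex.exp (ε * (π * Complex.I)) = -1 := by
    rcases hε with rfl | rfl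
    · simp
    · simp [Complex.exp_neg]
  rw [neg_eq_neg_one_mul, ← hpi, rayDir, ← Complex.exp_nat_mul, ← Complex.exp_add,
    ← Complex.exp_add]
  push_cast
  ring_nf

lemma airyRay_saddle {ε : ℝ} (hε : ε = 1 ∨ ε = -1) (ℓ : ℂ) :
    airyRay (rayDir ε) (Complex.exp (2 * ℓ)) (Complex.exp ℓ) =
      Complex.exp (-(2 / 3 * Complex.exp (3 * ℓ))) * (rayDir ε * ∫ u in Ioi (0 : ℝ),
        Complex.exp (-Complex.exp (ℓ - (ε * (π / 9) : ℝ) * Complex.I) * (u : ℂ) ^ 2) *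
          Complex.exp (rayDir ε ^ 3 / 3 * (u : ℂ) ^ 3)) := by
  rw [airyRay, ← integral_const_mul, ← integral_const_mul]
  refine integral_congr_ae (Eventually.of_forall fun u => ?_)
  have e2 : Complex.exp (2 * ℓ) = Complex.exp ℓ ^ 2 := by
    rw [← Complex.exp_nat_mul]; norm_num
  have e3 : Complex.exp (3 * ℓ) = Complex.exp ℓ ^ 3 := by
    rw [← Complex.exp_nat_mul]; norm_num
  simp only
  rw [← rayDir_sq_mul_exp hε, e2, e3, mul_left_comm, ← Complex.exp_add, ← Complex.exp_add]
  congr 2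
  ring

lemma rayDir_pow_mul_expMoment {ε : ℝ} (hε : ε = 1 ∨ ε = -1) (k : ℕ) {ℓ : ℂ}
    (hℓ : |ℓ.im| ≤ π / 3) :
    rayDir ε ^ (k + 1) * expMoment k 2 (ℓ - (ε * (π / 9) : ℝ) * Complex.I) =
      1 / 2 * Complex.Gamma ((k + 1 : ℕ) / 2) * Complex.exp (-((k + 1 : ℕ) * (ℓ / 2))) *
        (ε * Complex.I) ^ (k + 1) := by
  have him : |(ℓ - (ε * (π / 9) : ℝ) * Complex.I).im| < π / 2 := by
    rw [Complex.sub_im, Complex.im_ofReal_mul, Complex.I_im]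
    have := Real.pi_pos
    have := abs_le.1 hℓ
    rcases hε with rfl | rfl <;> rw [abs_lt] <;> constructor <;> linarith
  have hI : (ε * Complex.I : ℂ) = Complex.exp (ε * (π / 2 * Complex.I)) := by
    rcases hε with rfl | rfl
    · simp [Complex.exp_pi_div_two_mul_I]
    · simp [Complex.exp_neg, Complex.exp_pi_div_two_mul_I]
  have e1 : Complex.exp (((k + 1 : ℕ) : ℂ) * ((ε * (4 * π / 9) : ℝ) * Complex.I)) *
      Complex.exp (-(ℓ - (ε * (π / 9) : ℝ) * Complex.I) * (((k + 1 : ℕ) : ℂ) / (2 : ℕ))) =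
      Complex.exp (-((k + 1 : ℕ) * (ℓ / 2))) *
      Complex.exp (((k + 1 : ℕ) : ℂ) * (ε * (π / 2 * Complex.I))) := by
    rw [← Complex.exp_add, ← Complex.exp_add]
    congr 1
    push_cast
    ring
  rw [expMoment_eq k (by norm_num) him, hI, rayDir, ← Complex.exp_nat_mul, ← Complex.exp_nat_mul]
  push_cast at e1 ⊢
  linear_combination (1 / 2 * Complex.Gamma (((k : ℂ) + 1) / 2)) * e1

lemma exists_saddle_integral_bound : ∃ C > (0 : ℝ), ∀ ε : ℝ, (ε = 1 ∨ ε = -1) → ∀ ℓ : ℂ,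
    |ℓ.im| ≤ π / 3 →
    ‖(rayDir ε * ∫ u in Ioi (0 : ℝ),
        Complex.exp (-Complex.exp (ℓ - (ε * (π / 9) : ℝ) * Complex.I) * (u : ℂ) ^ 2) *
          Complex.exp (rayDir ε ^ 3 / 3 * (u : ℂ) ^ 3)) -
      ∑ j ∈ Finset.range 4, 1 / ((3 : ℂ) ^ j * j.factorial) *
        (rayDir ε ^ (3 * j + 1) * expMoment (3 * j) 2 (ℓ - (ε * (π / 9) : ℝ) * Complex.I))‖ ≤
      C * Real.exp (-(13 / 2) * ℓ.re) := by
  have hpi := Real.pi_pos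
  set c₀ := Real.cos (4 * π / 9) with hc₀
  have hc₀0 : 0 < c₀ := Real.cos_pos_of_mem_Ioo ⟨by linarith, by linarith⟩
  refine ⟨c₀ ^ (-(13 / 2) : ℝ) * (1 / 2) * Real.Gamma (13 / 2),
    by have := Real.Gamma_pos_of_pos (show (0 : ℝ) < 13 / 2 by norm_num); positivity,
    fun ε hε ℓ hℓ => ?_⟩
  set β := ℓ - (ε * (π / 9) : ℝ) * Complex.I with hβ
  set d := rayDir ε with hd
  have hβre : c₀ * Real.exp ℓ.re ≤ (Complex.exp β).re := by
    rw [Complex.exp_re, hβ, Complex.sub_re, Complex.sub_im, Complex.im_ofReal_mul,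
      Complex.re_ofReal_mul, Complex.I_im, Complex.I_re, mul_zero, sub_zero, mul_one, mul_comm]
    refine mul_le_mul_of_nonneg_left ?_ (Real.exp_pos _).le
    rw [hc₀, ← Real.cos_abs (ℓ.im - _)]
    refine Real.cos_le_cos_of_nonneg_of_le_pi (abs_nonneg _) (by linarith) ?_
    have := abs_le.1 hℓ
    rcases hε with rfl | rfl <;> rw [abs_le] <;> constructor <;> linarith
  have hβ0 : 0 < (Complex.exp β).re := lt_of_lt_of_le (by positivity) hβre
  have hT : ∀ j : ℕ, IntegrableOn (fun u : ℝ => 1 / ((3 : ℂ) ^ j * j.factorial) * (d ^ (3 * j) *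
      ((u : ℂ) ^ (3 * j) * Complex.exp (-Complex.exp β * (u : ℂ) ^ 2)))) (Ioi 0) := fun j =>
    ((integrableOn_pow_mul_cexp_neg_mul_pow (3 * j) (by norm_num) hβ0).const_mul _).const_mul _
  have hre3 : (d ^ 3 / 3).re = -(1 / 6) := by
    have : (d ^ 3 / 3).re = (d ^ 3).re / 3 := by simp
    rw [this, rayDir_pow_three_re hε]; norm_num
  have hre : ∀ u : ℝ, 0 < u → (d ^ 3 / 3 * (u : ℂ) ^ 3).re ≤ 0 := fun u hu => by
    rw [← Complex.ofReal_pow, Complex.re_mul_ofReal, hre3]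
    have : 0 < u ^ 3 := by positivity
    linarith
  have hF : IntegrableOn (fun u : ℝ => Complex.exp (-Complex.exp β * (u : ℂ) ^ 2) *
      Complex.exp (d ^ 3 / 3 * (u : ℂ) ^ 3)) (Ioi 0) := by
    refine Integrable.mono' (integrableOn_pow_mul_exp_neg_mul_pow 0 (m := 2) (by norm_num) hβ0)
      (by fun_prop) ?_
    refine (ae_restrict_iff' measurableSet_Ioi).2 (Eventually.of_forall fun u hu => ?_)
    have h1 := norm_pow_mul_exp_neg_mul_pow 0 2 (Complex.exp β) hu
    simp only [pow_zero, one_mul] at h1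
    rw [norm_mul, h1, pow_zero, one_mul]
    refine mul_le_of_le_one_right (Real.exp_pos _).le ?_
    rw [Complex.norm_exp]
    exact Real.exp_le_one_iff.2 (hre u hu)
  have hsum : ∑ j ∈ Finset.range 4, 1 / ((3 : ℂ) ^ j * j.factorial) *
      (d ^ (3 * j + 1) * expMoment (3 * j) 2 β) =
      d * ∫ u in Ioi (0 : ℝ), ∑ j ∈ Finset.range 4, 1 / ((3 : ℂ) ^ j * j.factorial) * (d ^ (3 * j) *
      ((u : ℂ) ^ (3 * j) * Complex.exp (-Complex.exp β * (u : ℂ) ^ 2))) := by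
    rw [integral_finsetSum _ fun j _ => hT j, Finset.mul_sum]
    refine Finset.sum_congr rfl fun j _ => ?_
    rw [integral_const_mul, integral_const_mul, expMoment]
    ring
  rw [hsum, ← mul_sub, ← integral_sub hF (integrable_finsetSum _ fun j _ => hT j), norm_mul,
    norm_rayDir, one_mul]
  have hb0 : 0 < c₀ * Real.exp ℓ.re := by positivity
  have hval := integral_rpow_mul_exp_neg_mul_rpow (p := (2 : ℕ)) (q := (12 : ℕ))
    (by norm_num) (by norm_num) hb0
  have hpow : (c₀ * Real.exp ℓ.re) ^ (-(13 / 2) : ℝ) =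
      c₀ ^ (-(13 / 2) : ℝ) * Real.exp (-(13 / 2) * ℓ.re) := by
    rw [Real.mul_rpow hc₀0.le (Real.exp_pos _).le, ← Real.exp_mul, mul_comm ℓ.re]
  calc _ ≤ ∫ u in Ioi (0 : ℝ), u ^ 12 * Real.exp (-(c₀ * Real.exp ℓ.re) * u ^ 2) := by
        refine norm_integral_le_of_norm_le
          (integrableOn_pow_mul_exp_neg_mul_pow 12 (by norm_num) hb0) ?_
        refine (ae_restrict_iff' measurableSet_Ioi).2 (Eventually.of_forall fun u hu => ?_)
        have hu0 : (0 : ℝ) < u := hu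
        have h1 := norm_pow_mul_exp_neg_mul_pow 0 2 (Complex.exp β) hu0
        simp only [pow_zero, one_mul] at h1
        have h2 := norm_exp_sub_sum_le_of_re_nonpos 4 _ (hre u hu0)
        have h3 : ‖d ^ 3 / 3 * (u : ℂ) ^ 3‖ ^ 4 ≤ u ^ 12 := by
          rw [norm_mul, norm_div, norm_pow, norm_rayDir, norm_pow, Complex.norm_of_nonneg hu0.le,
            Complex.norm_ofNat]
          have : 0 < u ^ 12 := by positivity
          nlinarith
        have e : Complex.exp (-Complex.exp β * (u : ℂ) ^ 2) * Complex.exp (d ^ 3 / 3 * (u : ℂ) ^ 3) -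
            ∑ j ∈ Finset.range 4, 1 / ((3 : ℂ) ^ j * j.factorial) * (d ^ (3 * j) *
              ((u : ℂ) ^ (3 * j) * Complex.exp (-Complex.exp β * (u : ℂ) ^ 2))) =
            Complex.exp (-Complex.exp β * (u : ℂ) ^ 2) * (Complex.exp (d ^ 3 / 3 * (u : ℂ) ^ 3) -
              ∑ j ∈ Finset.range 4, (d ^ 3 / 3 * (u : ℂ) ^ 3) ^ j / (j.factorial : ℂ)) := by
          rw [mul_sub, Finset.mul_sum]
          congr 1
          refine Finset.sum_congr rfl fun j _ => ?_
          rw [mul_pow, div_pow, pow_mul, pow_mul]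
          field_simp
        rw [e, norm_mul, h1, mul_comm]
        refine mul_le_mul (h2.trans h3) (Real.exp_le_exp.2 ?_) (Real.exp_pos _).le (by positivity)
        have := mul_le_mul_of_nonneg_right hβre (sq_nonneg u)
        linarith
    _ = (c₀ * Real.exp ℓ.re) ^ (-(13 / 2) : ℝ) * (1 / 2) * Real.Gamma (13 / 2) := by
        simp only [Real.rpow_natCast] at hval
        rw [hval]
        norm_num
    _ = _ := by rw [hpow]; ring

/-- The coefficient of `e^{-3ℓ}` in the asymptotic expansion of `airyAmp`. -/
noncomputable def airyConst : ℂ := Complex.Gamma (7 / 2) / (18 * (√π : ℝ))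

/-- `Ai(e^{2ℓ})`, normalized by its leading asymptotics. -/
noncomputable def airyAmp (ℓ : ℂ) : ℂ :=
  Ai (Complex.exp (2 * ℓ)) * (2 * (√π : ℝ)) *
    Complex.exp (2 / 3 * Complex.exp (3 * ℓ) + ℓ / 2)

lemma exists_airyAmp_bound_sector : ∃ C > (0 : ℝ), ∀ ℓ : ℂ, |ℓ.im| ≤ π / 3 →
    ‖airyAmp ℓ - (1 - airyConst * Complex.exp (-3 * ℓ))‖ ≤ C * Real.exp (-6 * ℓ.re) := by
  obtain ⟨C, hC, h⟩ := exists_saddle_integral_bound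
  refine ⟨2 * C / √π, by have := Real.pi_pos; positivity, fun ℓ hℓ => ?_⟩
  set K : ℝ → ℂ := fun ε => rayDir ε * ∫ u in Ioi (0 : ℝ),
        Complex.exp (-Complex.exp (ℓ - (ε * (π / 9) : ℝ) * Complex.I) * (u : ℂ) ^ 2) *
          Complex.exp (rayDir ε ^ 3 / 3 * (u : ℂ) ^ 3) with hK
  set S : ℝ → ℂ := fun ε => ∑ j ∈ Finset.range 4, 1 / ((3 : ℂ) ^ j * j.factorial) *
        (rayDir ε ^ (3 * j + 1) * expMoment (3 * j) 2 (ℓ - (ε * (π / 9) : ℝ) * Complex.I)) with hS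
  have hpos : (0 : ℝ) < √π := Real.sqrt_pos.2 Real.pi_pos
  have hsq : ((√π : ℝ) : ℂ) ^ 2 = π := by
    rw [← Complex.ofReal_pow, Real.sq_sqrt Real.pi_pos.le]
  have hsq0 : ((√π : ℝ) : ℂ) ≠ 0 := by exact_mod_cast hpos.ne'
  have hA : airyAmp ℓ = Complex.exp (ℓ / 2) / ((√π : ℝ) * Complex.I) * (K 1 - K (-1)) := by
    rw [airyAmp, Ai_eq_airyRay _ (Complex.exp ℓ), airyRay_saddle (.inl rfl),
      airyRay_saddle (.inr rfl), Complex.exp_add, Complex.exp_neg]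
    have := Complex.exp_ne_zero (2 / 3 * Complex.exp (3 * ℓ))
    rw [← hsq]
    field_simp
    simp only [hK]
    ring_nf
  have hG : Complex.Gamma (1 / 2) = (√π : ℝ) := by
    have := Complex.Gamma_ofReal (1 / 2)
    push_cast at this
    rw [this, Real.Gamma_one_half_eq]
  have hM : 1 - airyConst * Complex.exp (-3 * ℓ) =
      Complex.exp (ℓ / 2) / ((√π : ℝ) * Complex.I) * (S 1 - S (-1)) := by
    have e0 : Complex.exp (-(ℓ / 2)) * Complex.exp (ℓ / 2) = 1 := by
      rw [← Complex.exp_add]; simp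
    have e2 : Complex.exp (-(7 * (ℓ / 2))) * Complex.exp (ℓ / 2) = Complex.exp (-3 * ℓ) := by
      rw [← Complex.exp_add]; ring_nf
    simp only [hS, rayDir_pow_mul_expMoment (.inl rfl) _ hℓ, rayDir_pow_mul_expMoment (.inr rfl) _ hℓ,
      Finset.sum_range_succ, Finset.sum_range_zero]
    simp only [mul_zero, mul_one, zero_add, Nat.reduceMul, Nat.reduceAdd, Nat.factorial]
    push_cast
    simp only [one_mul, airyConst, neg_mul, one_div] at e2 ⊢
    have hI4 : Complex.I ^ 4 = 1 := Complex.I_pow_four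
    have hI7 : Complex.I ^ 7 = -Complex.I := by
      linear_combination Complex.I ^ 3 * hI4 + Complex.I * Complex.I_sq
    have hm7 : (-Complex.I) ^ 7 = Complex.I := by rw [Odd.neg_pow (by decide), hI7, neg_neg]
    have hm4 : (-Complex.I) ^ 4 = Complex.I ^ 4 := Even.neg_pow (by decide) _
    have hm10 : (-Complex.I) ^ 10 = Complex.I ^ 10 := Even.neg_pow (by decide) _
    rw [hI7, hm7, hm4, hm10, ← e2]
    have hI := Complex.I_ne_zero
    field_simp
    linear_combination (-11664 * ((√π : ℝ) : ℂ)) * e0 - 11664 * Complex.exp (ℓ / 2) * Complex.exp (-(ℓ / 2)) * hG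
  have hd : ‖(K 1 - K (-1)) - (S 1 - S (-1))‖ ≤ 2 * C * Real.exp (-(13 / 2) * ℓ.re) := by
    have h1 := h 1 (.inl rfl) ℓ hℓ
    have h2 := h (-1) (.inr rfl) ℓ hℓ
    calc ‖(K 1 - K (-1)) - (S 1 - S (-1))‖ = ‖(K 1 - S 1) - (K (-1) - S (-1))‖ := by
          congr 1; ring
      _ ≤ _ := (norm_sub_le _ _).trans (add_le_add h1 h2)
      _ = _ := by ring
  rw [hA, hM, ← mul_sub, norm_mul, norm_div, norm_mul, Complex.norm_I, mul_one,
    Complex.norm_of_nonneg hpos.le, Complex.norm_exp]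
  calc _ ≤ Real.exp (ℓ / 2).re / √π * (2 * C * Real.exp (-(13 / 2) * ℓ.re)) := by gcongr
    _ = 2 * C / √π * (Real.exp (ℓ / 2).re * Real.exp (-(13 / 2) * ℓ.re)) := by ring
    _ = _ := by
      rw [← Real.exp_add]
      have : (ℓ / 2).re = ℓ.re / 2 := by simp
      rw [this]
      ring_nf

end AiryAsymptotics

section AiryExtension

lemma Ai_exp_two_mul (m : ℂ) : Ai (Complex.exp (2 * m)) * (2 * (√π : ℝ)) =
    airyAmp m * Complex.exp (-(2 / 3 * Complex.exp (3 * m) + m / 2)) := by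
  rw [airyAmp, mul_assoc, ← Complex.exp_add]
  simp

lemma airyAmp_eq_of_shift {ℓ m n p : ℂ}
    (hm : Complex.exp (3 * m) = -Complex.exp (3 * ℓ))
    (hn : Complex.exp (3 * n) = Complex.exp (3 * ℓ))
    (hAi : Ai (Complex.exp (2 * ℓ)) = p * Ai (Complex.exp (2 * m)) +
      Complex.exp ((n - ℓ) / 2) * Ai (Complex.exp (2 * n))) :
    airyAmp ℓ = airyAmp n +
      p * Complex.exp ((ℓ - m) / 2) * Complex.exp (4 / 3 * Complex.exp (3 * ℓ)) * airyAmp m := by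
  have h1 := Ai_exp_two_mul m
  have h2 := Ai_exp_two_mul n
  rw [hm] at h1
  rw [hn] at h2
  have e1 : Complex.exp (-(2 / 3 * Complex.exp (3 * ℓ) + n / 2)) * Complex.exp ((n - ℓ) / 2) *
      Complex.exp (2 / 3 * Complex.exp (3 * ℓ) + ℓ / 2) = 1 := by
    rw [← Complex.exp_add, ← Complex.exp_add, ← Complex.exp_zero]; ring_nf
  have e2 : Complex.exp (-(2 / 3 * -Complex.exp (3 * ℓ) + m / 2)) *
      Complex.exp (2 / 3 * Complex.exp (3 * ℓ) + ℓ / 2) =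
      Complex.exp ((ℓ - m) / 2) * Complex.exp (4 / 3 * Complex.exp (3 * ℓ)) := by
    rw [← Complex.exp_add, ← Complex.exp_add]; ring_nf
  rw [airyAmp, hAi]
  linear_combination p * Complex.exp (2 / 3 * Complex.exp (3 * ℓ) + ℓ / 2) * h1 +
    Complex.exp ((n - ℓ) / 2) * Complex.exp (2 / 3 * Complex.exp (3 * ℓ) + ℓ / 2) * h2 +
    airyAmp n * e1 + p * airyAmp m * e2

lemma ωc_eq : ωc = Complex.exp ((2 * π / 3 : ℝ) * Complex.I) := by
  rw [ωc]; push_cast; ring_nf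

lemma norm_ωc : ‖ωc‖ = 1 := by
  rw [ωc_eq, Complex.norm_exp_ofReal_mul_I]

lemma exp_eq_exp_of_sub_eq {x y : ℂ} (n : ℤ) (h : x - y = n * (2 * π * Complex.I)) :
    Complex.exp x = Complex.exp y :=
  Complex.exp_eq_exp_iff_exists_int.2 ⟨n, by linear_combination h⟩

lemma exists_airyAmp_shift {σ : ℝ} (hσ : σ = 1 ∨ σ = -1) (ℓ : ℂ) : ∃ u : ℂ, ‖u‖ = 1 ∧
    airyAmp ℓ = airyAmp (ℓ + (σ * (2 * π / 3) : ℝ) * Complex.I) +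
      u * Complex.exp (4 / 3 * Complex.exp (3 * ℓ)) *
        airyAmp (ℓ + (σ * (π / 3) : ℝ) * Complex.I) := by
  have hc := Ai_connection (Complex.exp (2 * ℓ))
  have hpi : -1 = Complex.exp (π * Complex.I) := Complex.exp_pi_mul_I.symm
  have hm : Complex.exp (3 * (ℓ + (σ * (π / 3) : ℝ) * Complex.I)) = -Complex.exp (3 * ℓ) := by
    rw [← neg_one_mul, hpi, ← Complex.exp_add]
    rcases hσ with rfl | rfl
    · congr 1; push_cast; ring
    · exact exp_eq_exp_of_sub_eq (-1) (by push_cast; ring)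
  have hn : Complex.exp (3 * (ℓ + (σ * (2 * π / 3) : ℝ) * Complex.I)) = Complex.exp (3 * ℓ) := by
    rcases hσ with rfl | rfl
    · exact exp_eq_exp_of_sub_eq 1 (by push_cast; ring)
    · exact exp_eq_exp_of_sub_eq (-1) (by push_cast; ring)
  have hshift (t : ℝ) : ‖Complex.exp ((ℓ - (ℓ + t * Complex.I)) / 2)‖ = 1 := by
    rw [Complex.norm_exp]; simp
  rcases hσ with rfl | rfl
  · refine ⟨-ωc * _, ?_, airyAmp_eq_of_shift (p := -ωc) hm hn ?_⟩
    · rw [norm_mul, norm_neg, norm_ωc, hshift, one_mul]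
    · have h1 : Complex.exp (2 * (ℓ + (1 * (π / 3) : ℝ) * Complex.I)) =
          ωc * Complex.exp (2 * ℓ) := by
        rw [ωc, ← Complex.exp_add]; congr 1; push_cast; ring
      have h2 : Complex.exp (2 * (ℓ + (1 * (2 * π / 3) : ℝ) * Complex.I)) =
          ωc ^ 2 * Complex.exp (2 * ℓ) := by
        rw [ωc, ← Complex.exp_nat_mul, ← Complex.exp_add]; congr 1; push_cast; ring
      have h3 : Complex.exp ((ℓ + (1 * (2 * π / 3) : ℝ) * Complex.I - ℓ) / 2) = -ωc ^ 2 := by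
        rw [ωc, ← Complex.exp_nat_mul, ← neg_one_mul, hpi, ← Complex.exp_add]
        exact exp_eq_exp_of_sub_eq (-1) (by push_cast; ring)
      rw [h1, h2, h3]
      linear_combination hc
  · refine ⟨-ωc ^ 2 * _, ?_, airyAmp_eq_of_shift (p := -ωc ^ 2) hm hn ?_⟩
    · rw [norm_mul, norm_neg, norm_pow, norm_ωc, hshift, one_pow, one_mul]
    · have h1 : Complex.exp (2 * (ℓ + (-1 * (π / 3) : ℝ) * Complex.I)) =
          ωc ^ 2 * Complex.exp (2 * ℓ) := by
        rw [ωc, ← Complex.exp_nat_mul, ← Complex.exp_add]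
        exact exp_eq_exp_of_sub_eq (-1) (by push_cast; ring)
      have h2 : Complex.exp (2 * (ℓ + (-1 * (2 * π / 3) : ℝ) * Complex.I)) =
          ωc * Complex.exp (2 * ℓ) := by
        rw [ωc, ← Complex.exp_add]
        exact exp_eq_exp_of_sub_eq (-1) (by push_cast; ring)
      have h3 : Complex.exp ((ℓ + (-1 * (2 * π / 3) : ℝ) * Complex.I - ℓ) / 2) = -ωc := by
        rw [ωc, ← neg_one_mul (Complex.exp _), hpi, ← Complex.exp_add]
        exact exp_eq_exp_of_sub_eq (-1) (by push_cast; ring)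
      rw [h1, h2, h3]
      linear_combination hc

/-- Two-term asymptotics of the Airy function with a quadratic error, in the sector
`|arg x| ≤ 2π/3` and beyond it as long as the second exponential is negligible. -/
theorem exists_airyAmp_bound : ∃ C > (0 : ℝ), ∀ ℓ : ℂ, 0 ≤ ℓ.re → |ℓ.im| ≤ 2 * π / 3 →
    (|ℓ.im| ≤ π / 3 ∨ 4 / 3 * (Complex.exp (3 * ℓ)).re ≤ -6 * ℓ.re) →
    ‖airyAmp ℓ - (1 - airyConst * Complex.exp (-3 * ℓ))‖ ≤ C * Real.exp (-6 * ℓ.re) := by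
  obtain ⟨C, hC, h⟩ := exists_airyAmp_bound_sector
  refine ⟨C + (1 + ‖airyConst‖ + C), by positivity, fun ℓ hre him hor => ?_⟩
  rcases le_or_gt |ℓ.im| (π / 3) with hsec | hsec
  · refine (h ℓ hsec).trans ?_
    gcongr
    linarith [norm_nonneg airyConst]
  have hexp := hor.resolve_left hsec.not_ge
  have hpi := Real.pi_pos
  obtain ⟨σ, hσ, h1, h2⟩ : ∃ σ : ℝ, (σ = 1 ∨ σ = -1) ∧ |ℓ.im + σ * (2 * π / 3)| ≤ π / 3 ∧
      |ℓ.im + σ * (π / 3)| ≤ π / 3 := by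
    rw [abs_le] at him
    rcases lt_abs.1 hsec with h | h
    · exact ⟨-1, .inr rfl, abs_le.2 ⟨by linarith, by linarith⟩, abs_le.2 ⟨by linarith, by linarith⟩⟩
    · exact ⟨1, .inl rfl, abs_le.2 ⟨by linarith, by linarith⟩, abs_le.2 ⟨by linarith, by linarith⟩⟩
  obtain ⟨u, hu, hA⟩ := exists_airyAmp_shift hσ ℓ
  have hn := h (ℓ + (σ * (2 * π / 3) : ℝ) * Complex.I) (by simpa using h1)
  have hm := h (ℓ + (σ * (π / 3) : ℝ) * Complex.I) (by simpa using h2)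
  have hre' (t : ℝ) : (ℓ + t * Complex.I).re = ℓ.re := by simp
  rw [hre'] at hn hm
  have hper : Complex.exp (-3 * (ℓ + (σ * (2 * π / 3) : ℝ) * Complex.I)) =
      Complex.exp (-3 * ℓ) := by
    rcases hσ with rfl | rfl
    · exact exp_eq_exp_of_sub_eq (-1) (by push_cast; ring)
    · exact exp_eq_exp_of_sub_eq 1 (by push_cast; ring)
  rw [hper] at hn
  set Am := airyAmp (ℓ + (σ * (π / 3) : ℝ) * Complex.I)
  set An := airyAmp (ℓ + (σ * (2 * π / 3) : ℝ) * Complex.I)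
  have hm' : ‖Am‖ ≤ 1 + ‖airyConst‖ + C := by
    set q := airyConst * Complex.exp (-3 * (ℓ + (σ * (π / 3) : ℝ) * Complex.I)) with hq
    have hq' : ‖q‖ ≤ ‖airyConst‖ := by
      rw [hq, norm_mul, Complex.norm_exp]
      refine mul_le_of_le_one_right (norm_nonneg _) (Real.exp_le_one_iff.2 ?_)
      simpa using hre
    have h6 : C * Real.exp (-6 * ℓ.re) ≤ C :=
      mul_le_of_le_one_right hC.le (Real.exp_le_one_iff.2 (by linarith))
    calc ‖Am‖ = ‖(Am - (1 - q)) + (1 - q)‖ := by congr 1; ring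
      _ ≤ ‖Am - (1 - q)‖ + (‖(1 : ℂ)‖ + ‖q‖) :=
          (norm_add_le _ _).trans (by gcongr; exact norm_sub_le _ _)
      _ ≤ _ := by rw [norm_one]; linarith
  have he : ‖Complex.exp (4 / 3 * Complex.exp (3 * ℓ))‖ ≤ Real.exp (-6 * ℓ.re) := by
    rw [Complex.norm_exp, Real.exp_le_exp]
    simpa using hexp
  calc ‖airyAmp ℓ - (1 - airyConst * Complex.exp (-3 * ℓ))‖
      = ‖(An - (1 - airyConst * Complex.exp (-3 * ℓ))) +
          u * Complex.exp (4 / 3 * Complex.exp (3 * ℓ)) * Am‖ := by rw [hA]; congr 1; ring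
    _ ≤ C * Real.exp (-6 * ℓ.re) + 1 * Real.exp (-6 * ℓ.re) * (1 + ‖airyConst‖ + C) := by
        refine (norm_add_le _ _).trans (add_le_add hn ?_)
        rw [norm_mul, norm_mul, hu]
        gcongr
    _ = _ := by ring

end AiryExtension

section RotatedAiry

/-- The logarithmic coordinate `ℓ` for which `e^{2ℓ} = e^{μ - 2it} f^{-2/3}`. -/
noncomputable def airyArg (f t : ℝ) (μ : ℂ) : ℂ := μ / 2 - (Real.log f / 3 : ℝ) - t * Complex.I

lemma exp_ofReal_log {f : ℝ} (hf : 0 < f) : Complex.exp (Real.log f : ℝ) = f := by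
  rw [← Complex.ofReal_exp, Real.exp_log hf]

lemma exp_neg_pi_div_two_mul_I : Complex.exp (-(π / 2 * Complex.I)) = -Complex.I := by
  rw [Complex.exp_neg, Complex.exp_pi_div_two_mul_I, Complex.inv_I]

lemma exp_three_mul_airyArg_pi_div_two {f : ℝ} (hf : 0 < f) (μ : ℂ) :
    Complex.exp (3 * airyArg f (π / 2) μ) = Complex.I * Complex.exp (3 * μ / 2) / f := by
  have : 3 * airyArg f (π / 2) μ - (3 * μ / 2 - (Real.log f : ℝ) + π / 2 * Complex.I) =
      (-1 : ℤ) * (2 * π * Complex.I) := by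
    rw [airyArg]; push_cast; ring
  rw [exp_eq_exp_of_sub_eq _ this, Complex.exp_add, Complex.exp_sub, exp_ofReal_log hf,
    Complex.exp_pi_div_two_mul_I]
  ring

lemma exp_three_mul_airyArg_pi_div_six {f : ℝ} (hf : 0 < f) (μ : ℂ) :
    Complex.exp (3 * airyArg f (π / 6) μ) = -(Complex.I * Complex.exp (3 * μ / 2) / f) := by
  have : 3 * airyArg f (π / 6) μ = 3 * μ / 2 - (Real.log f : ℝ) + -(π / 2 * Complex.I) := by
    rw [airyArg]; push_cast; ring
  rw [this, Complex.exp_add, Complex.exp_sub, exp_ofReal_log hf, exp_neg_pi_div_two_mul_I]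
  ring

lemma exp_two_mul_airyArg_pi_div_two {f : ℝ} (hf : 0 < f) (μ : ℂ) :
    Complex.exp (2 * airyArg f (π / 2) μ) =
      -Complex.exp μ * ((f ^ (-(2 : ℝ) / 3) : ℝ) : ℂ) := by
  rw [Real.rpow_def_of_pos hf, Complex.ofReal_exp, neg_mul, ← Complex.exp_add,
    ← neg_one_mul (Complex.exp _), ← Complex.exp_pi_mul_I, ← Complex.exp_add]
  exact exp_eq_exp_of_sub_eq (-1) (by rw [airyArg]; push_cast; ring)

lemma exp_two_mul_airyArg_pi_div_six {f : ℝ} (hf : 0 < f) (μ : ℂ) :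
    Complex.exp (2 * airyArg f (π / 6) μ) =
      -ωc * Complex.exp μ * ((f ^ (-(2 : ℝ) / 3) : ℝ) : ℂ) := by
  rw [Real.rpow_def_of_pos hf, Complex.ofReal_exp, ωc, neg_mul, neg_mul, ← Complex.exp_add,
    ← Complex.exp_add,
    ← neg_one_mul (Complex.exp _), ← Complex.exp_pi_mul_I, ← Complex.exp_add]
  exact exp_eq_exp_of_sub_eq (-1) (by rw [airyArg]; push_cast; ring)

/-- The building blocks of `D_f` in terms of the normalized Airy amplitudes. -/
lemma Ai_mul_Ai_div_Wf {f : ℝ} (hf : 0 < f) (μ ν : ℂ) :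
    Ai (-ωc * Complex.exp μ * ((f ^ (-(2 : ℝ) / 3) : ℝ) : ℂ)) *
      Ai (-Complex.exp ν * ((f ^ (-(2 : ℝ) / 3) : ℝ) : ℂ)) / Wf f =
    Complex.I / 2 * Complex.exp (-(μ + ν) / 4) *
      Complex.exp (2 * Complex.I / (3 * f) * (Complex.exp (3 * μ / 2) - Complex.exp (3 * ν / 2))) *
      (airyAmp (airyArg f (π / 6) μ) * airyAmp (airyArg f (π / 2) ν)) := by
  rw [← exp_two_mul_airyArg_pi_div_two hf, ← exp_two_mul_airyArg_pi_div_six hf]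
  have h1 := Ai_exp_two_mul (airyArg f (π / 6) μ)
  have h2 := Ai_exp_two_mul (airyArg f (π / 2) ν)
  have hpi : ((√π : ℝ) : ℂ) ^ 2 = π := by
    rw [← Complex.ofReal_pow, Real.sq_sqrt Real.pi_pos.le]
  have hpi0 : (π : ℂ) ≠ 0 := by exact_mod_cast Real.pi_ne_zero
  have hWe : Wf f = Complex.exp ((Real.log f : ℝ) * (1 / 3) + -(π : ℂ) * Complex.I / 6) /
      (2 * π) := by
    rw [Wf, Real.rpow_def_of_pos hf, Complex.ofReal_exp, ← Complex.exp_add]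
    push_cast; rfl
  have hW : Wf f ≠ 0 := by
    rw [hWe]; exact div_ne_zero (Complex.exp_ne_zero _) (by simp)
  have hWI : 2 * π * Wf f * Complex.I = Complex.exp ((Real.log f : ℝ) * (1 / 3) +
      -(π : ℂ) * Complex.I / 6 + π / 2 * Complex.I) := by
    rw [hWe, Complex.exp_add _ (π / 2 * Complex.I), Complex.exp_pi_div_two_mul_I]
    field_simp
  rw [exp_three_mul_airyArg_pi_div_six hf] at h1
  rw [exp_three_mul_airyArg_pi_div_two hf] at h2
  have he : Complex.exp (-(2 / 3 * -(Complex.I * Complex.exp (3 * μ / 2) / f) +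
        airyArg f (π / 6) μ / 2)) *
      Complex.exp (-(2 / 3 * (Complex.I * Complex.exp (3 * ν / 2) / f) +
        airyArg f (π / 2) ν / 2)) =
      2 * π * Wf f * Complex.I * (Complex.exp (-(μ + ν) / 4) *
      Complex.exp (2 * Complex.I / (3 * f) *
        (Complex.exp (3 * μ / 2) - Complex.exp (3 * ν / 2)))) := by
    rw [hWI, ← Complex.exp_add, ← Complex.exp_add, ← Complex.exp_add]
    congr 1
    rw [airyArg, airyArg]
    push_cast
    have hf' : (f : ℂ) ≠ 0 := by exact_mod_cast hf.ne'
    field_simp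
    ring
  rw [div_eq_iff hW]
  refine mul_left_cancel₀ (b := Ai _ * Ai _) (a := 4 * (π : ℂ)) (by simp) ?_
  have h3 : (Ai (Complex.exp (2 * airyArg f (π / 6) μ)) * (2 * (√π : ℝ))) *
      (Ai (Complex.exp (2 * airyArg f (π / 2) ν)) * (2 * (√π : ℝ))) =
      airyAmp (airyArg f (π / 6) μ) * airyAmp (airyArg f (π / 2) ν) *
      (2 * π * Wf f * Complex.I * (Complex.exp (-(μ + ν) / 4) *
      Complex.exp (2 * Complex.I / (3 * f) *
        (Complex.exp (3 * μ / 2) - Complex.exp (3 * ν / 2))))) := by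
    rw [h1, h2, ← he]; ring
  linear_combination h3 - 4 * Ai (Complex.exp (2 * airyArg f (π / 6) μ)) *
    Ai (Complex.exp (2 * airyArg f (π / 2) ν)) * hpi

lemma exists_airyAmp_airyArg_bound : ∃ C > (0 : ℝ), ∀ (f : ℝ) (μ : ℂ), 0 < f →
    0 < μ.im → μ.im < 4 * π / 3 → 0 ≤ 3 * μ.re - 2 * Real.log f →
    (3 * μ.re - 2 * Real.log f) ≤ 4 / π * (Real.exp (3 * μ.re / 2) / f) * μ.im →
    (3 * μ.re - 2 * Real.log f) ≤ 4 / π * (Real.exp (3 * μ.re / 2) / f) * (4 * π / 3 - μ.im) →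
    ‖airyAmp (airyArg f (π / 2) μ) - (1 + airyConst * Complex.I * (f * Complex.exp (-3 * μ / 2)))‖
        ≤ C * (f ^ 2 * Real.exp (-3 * μ.re)) ∧
    ‖airyAmp (airyArg f (π / 6) μ) - (1 - airyConst * Complex.I * (f * Complex.exp (-3 * μ / 2)))‖
        ≤ C * (f ^ 2 * Real.exp (-3 * μ.re)) := by
  obtain ⟨C, hC, h⟩ := exists_airyAmp_bound
  refine ⟨C, hC, fun f μ hf h0 h1 h2 h3 h4 => ?_⟩
  have hpi := Real.pi_pos
  have hre (t : ℝ) : (airyArg f t μ).re = (3 * μ.re - 2 * Real.log f) / 6 := by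
    simp [airyArg]; ring
  have him (t : ℝ) : (airyArg f t μ).im = μ.im / 2 - t := by simp [airyArg]
  have hexp (t : ℝ) : Real.exp (-6 * (airyArg f t μ).re) = f ^ 2 * Real.exp (-3 * μ.re) := by
    rw [hre, ← Real.exp_log (pow_pos hf 2), ← Real.exp_add, Real.log_pow]; push_cast; ring_nf
  have hE : (Complex.I * Complex.exp (3 * μ / 2) / f).re =
      -(Real.exp (3 * μ.re / 2) / f * Real.sin (3 * μ.im / 2)) := by
    have : (3 * μ / 2) = ((3 * μ.re / 2 : ℝ) : ℂ) + (3 * μ.im / 2 : ℝ) * Complex.I := by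
      nth_rewrite 1 [← Complex.re_add_im μ]; push_cast; ring
    rw [this, Complex.div_ofReal_re, Complex.I_mul_re, Complex.exp_im]
    simp; ring
  have hsin {ψ : ℝ} (hψ : 0 < ψ) (hψ' : ψ < π / 3)
      (hb : (3 * μ.re - 2 * Real.log f) ≤ 4 / π * (Real.exp (3 * μ.re / 2) / f) * ψ) :
      3 * μ.re - 2 * Real.log f ≤
        4 / 3 * (Real.exp (3 * μ.re / 2) / f * Real.sin (3 * ψ / 2)) := by
    have := Real.mul_le_sin (x := 3 * ψ / 2) (by linarith) (by linarith)
    calc _ ≤ _ := hb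
      _ = 4 / 3 * (Real.exp (3 * μ.re / 2) / f * (2 / π * (3 * ψ / 2))) := by field_simp
      _ ≤ _ := by gcongr
  have hf' : (f : ℂ) ≠ 0 := by exact_mod_cast hf.ne'
  have hinv : Complex.exp (-3 * μ / 2) = (Complex.exp (3 * μ / 2))⁻¹ := by
    rw [← Complex.exp_neg]; ring_nf
  constructor
  · have hm := h (airyArg f (π / 2) μ) (by rw [hre]; linarith)
      (by rw [him, abs_le]; constructor <;> linarith) ?_
    · rw [hexp] at hm
      have e : Complex.exp (-3 * airyArg f (π / 2) μ) =
          -(Complex.I * (f * Complex.exp (-3 * μ / 2))) := by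
        rw [neg_mul, Complex.exp_neg, exp_three_mul_airyArg_pi_div_two hf, hinv, inv_div,
          ← div_div, div_eq_mul_inv _ (Complex.exp _), div_eq_mul_inv _ Complex.I, Complex.inv_I]
        ring
      rwa [e, mul_neg, sub_neg_eq_add, ← mul_assoc] at hm
    · rcases le_or_gt (π / 3) μ.im with hc | hc
      · left; rw [him, abs_le]; constructor <;> linarith
      · right
        rw [exp_three_mul_airyArg_pi_div_two hf, hE, hre]
        linarith [hsin h0 hc h3]
  · have hm := h (airyArg f (π / 6) μ) (by rw [hre]; linarith)
      (by rw [him, abs_le]; constructor <;> linarith) ?_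
    · rw [hexp] at hm
      have e : Complex.exp (-3 * airyArg f (π / 6) μ) =
          Complex.I * (f * Complex.exp (-3 * μ / 2)) := by
        rw [neg_mul, Complex.exp_neg, exp_three_mul_airyArg_pi_div_six hf, hinv, inv_neg, inv_div,
          ← div_div, div_eq_mul_inv _ (Complex.exp _), div_eq_mul_inv _ Complex.I, Complex.inv_I]
        ring
      rwa [e, ← mul_assoc] at hm
    · rcases le_or_gt μ.im π with hc | hc
      · left; rw [him, abs_le]; constructor <;> linarith
      · right
        rw [exp_three_mul_airyArg_pi_div_six hf, Complex.neg_re, hE, hre]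
        have := hsin (ψ := 4 * π / 3 - μ.im) (by linarith) (by linarith) h4
        have e : Real.sin (3 * (4 * π / 3 - μ.im) / 2) = -Real.sin (3 * μ.im / 2) := by
          rw [show 3 * (4 * π / 3 - μ.im) / 2 = 2 * π - 3 * μ.im / 2 by ring, Real.sin_two_pi_sub]
        rw [e] at this
        linarith

end RotatedAiry

section SquareRoots

/-- The principal square root of `1 + h`. -/
noncomputable def sqrtOneAdd (h : ℂ) : ℂ := Complex.exp (Complex.log (1 + h) / 2)

lemma one_add_ne_zero_of_norm_lt {h : ℂ} (hh : ‖h‖ < 1) : 1 + h ≠ 0 := by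
  intro h0
  have : h = -1 := by linear_combination h0
  simp [this] at hh

lemma sqrtOneAdd_sq {h : ℂ} (hh : ‖h‖ < 1) : sqrtOneAdd h ^ 2 = 1 + h := by
  rw [sqrtOneAdd, ← Complex.exp_nat_mul]
  push_cast
  rw [mul_div_cancel₀ _ two_ne_zero, Complex.exp_log (one_add_ne_zero_of_norm_lt hh)]

lemma norm_sqrtOneAdd_sub_one_le {h : ℂ} (hh : ‖h‖ < 1) : ‖sqrtOneAdd h - 1‖ ≤ ‖h‖ := by
  have hre : 0 ≤ (sqrtOneAdd h).re := by
    have h1 := Complex.neg_pi_lt_log_im (1 + h)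
    have h2 := Complex.log_im_le_pi (1 + h)
    rw [sqrtOneAdd, Complex.exp_re]
    refine mul_nonneg (Real.exp_pos _).le (Real.cos_nonneg_of_mem_Icc ⟨?_, ?_⟩)
    · simp only [Complex.div_ofNat_im]; linarith
    · simp only [Complex.div_ofNat_im]; linarith
  have h1 : 1 ≤ ‖sqrtOneAdd h + 1‖ := by
    refine le_trans ?_ (Complex.re_le_norm _)
    simpa using hre
  have h2 : (sqrtOneAdd h - 1) * (sqrtOneAdd h + 1) = h := by
    linear_combination sqrtOneAdd_sq hh
  calc ‖sqrtOneAdd h - 1‖ ≤ ‖sqrtOneAdd h - 1‖ * ‖sqrtOneAdd h + 1‖ :=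
        le_mul_of_one_le_right (norm_nonneg _) h1
    _ = ‖h‖ := by rw [← norm_mul, h2]

variable {u v h : ℂ}

lemma half_le_norm_of_norm_sub_one_le {a : ℂ} (ha : ‖a - 1‖ ≤ 1 / 2) : 1 / 2 ≤ ‖a‖ := by
  have := norm_sub_norm_le (1 : ℂ) (1 - a)
  rw [norm_one, sub_sub_cancel, norm_sub_rev] at this
  linarith

lemma norm_mul_sub_one_le (hu : u ^ 2 = 1 + h) (hv : v ^ 2 = 1 - h) (hh : ‖h‖ ≤ 1 / 10)
    (hu1 : ‖u - 1‖ ≤ ‖h‖) (hv1 : ‖v - 1‖ ≤ ‖h‖) : ‖u * v - 1‖ ≤ ‖h‖ ^ 2 := by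
  have h1 : ‖u * v - 1‖ ≤ 1 := by
    calc ‖u * v - 1‖ = ‖(u - 1) * (v - 1) + (u - 1) + (v - 1)‖ := by congr 1; ring
      _ ≤ ‖u - 1‖ * ‖v - 1‖ + ‖u - 1‖ + ‖v - 1‖ := by
        refine (norm_add_le _ _).trans (add_le_add_left ((norm_add_le _ _).trans ?_) _)
        rw [norm_mul]
      _ ≤ 1 / 10 * (1 / 10) + 1 / 10 + 1 / 10 := by
        gcongr <;> linarith
      _ ≤ 1 := by norm_num
  have h2 : 1 ≤ ‖u * v + 1‖ := by
    have := norm_sub_norm_le (2 : ℂ) (-(u * v - 1))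
    rw [norm_neg, show (2 : ℂ) - -(u * v - 1) = u * v + 1 by ring, Complex.norm_ofNat] at this
    linarith
  calc ‖u * v - 1‖ ≤ ‖u * v - 1‖ * ‖u * v + 1‖ := le_mul_of_one_le_right (norm_nonneg _) h2
    _ = ‖-h ^ 2‖ := by
      rw [← norm_mul]; congr 1; linear_combination v ^ 2 * hu + (1 + h) * hv
    _ = _ := by rw [norm_neg, norm_pow]

lemma norm_add_sub_two_le (hu : u ^ 2 = 1 + h) (hv : v ^ 2 = 1 - h) (hh : ‖h‖ ≤ 1 / 10)
    (hu1 : ‖u - 1‖ ≤ ‖h‖) (hv1 : ‖v - 1‖ ≤ ‖h‖) : ‖u + v - 2‖ ≤ ‖h‖ ^ 2 := by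
  have h1 : ‖u + v - 2‖ ≤ 2 := by
    calc ‖u + v - 2‖ = ‖(u - 1) + (v - 1)‖ := by congr 1; ring
      _ ≤ _ := norm_add_le _ _
      _ ≤ 2 := by linarith
  have h2 : 2 ≤ ‖u + v + 2‖ := by
    have := norm_sub_norm_le (4 : ℂ) (-(u + v - 2))
    rw [norm_neg, show (4 : ℂ) - -(u + v - 2) = u + v + 2 by ring, Complex.norm_ofNat] at this
    linarith
  have h3 : ‖u + v - 2‖ * ‖u + v + 2‖ = 2 * ‖u * v - 1‖ := by
    rw [← norm_mul, ← Complex.norm_ofNat 2, ← norm_mul]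
    congr 1
    linear_combination hu + hv
  have h4 := norm_mul_sub_one_le hu hv hh hu1 hv1
  nlinarith [norm_nonneg (u + v - 2)]

lemma norm_inv_le_two {a : ℂ} (ha : ‖a - 1‖ ≤ 1 / 2) : ‖a⁻¹‖ ≤ 2 := by
  have := half_le_norm_of_norm_sub_one_le ha
  rw [norm_inv]
  exact inv_le_of_inv_le₀ (by norm_num) (by linarith)

lemma norm_inv_add_inv_sub_two_le (hu : u ^ 2 = 1 + h) (hv : v ^ 2 = 1 - h) (hh : ‖h‖ ≤ 1 / 10)
    (hu1 : ‖u - 1‖ ≤ ‖h‖) (hv1 : ‖v - 1‖ ≤ ‖h‖) :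
    ‖u⁻¹ + v⁻¹ - 2‖ ≤ 6 * ‖h‖ ^ 2 ∧ ‖u⁻¹ * v⁻¹ - 1‖ ≤ 6 * ‖h‖ ^ 2 := by
  have h1 := norm_mul_sub_one_le hu hv hh hu1 hv1
  have h2 := norm_add_sub_two_le hu hv hh hu1 hv1
  have hsq : ‖h‖ ^ 2 ≤ 1 / 2 := by nlinarith [norm_nonneg h]
  have h3 := norm_inv_le_two (h1.trans hsq)
  have hu0 : u ≠ 0 := by rintro rfl; norm_num at hu1; linarith
  have hv0 : v ≠ 0 := by rintro rfl; norm_num at hv1; linarith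
  constructor
  · calc ‖u⁻¹ + v⁻¹ - 2‖ = ‖(u + v - 2 - 2 * (u * v - 1)) * (u * v)⁻¹‖ := by
          congr 1; field_simp; ring
      _ ≤ (‖h‖ ^ 2 + 2 * ‖h‖ ^ 2) * 2 := by
          rw [norm_mul]
          gcongr
          refine (norm_sub_le _ _).trans (add_le_add h2 ?_)
          rw [norm_mul, Complex.norm_ofNat]
          gcongr
      _ = _ := by ring
  · calc ‖u⁻¹ * v⁻¹ - 1‖ = ‖-(u * v - 1) * (u * v)⁻¹‖ := by
          congr 1; field_simp; ring
      _ ≤ ‖h‖ ^ 2 * 2 := by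
          rw [norm_mul, norm_neg]
          gcongr
      _ ≤ _ := by nlinarith [sq_nonneg ‖h‖]

lemma norm_cube_sub_cube_sub_le (hu : u ^ 2 = 1 + h) (hv : v ^ 2 = 1 - h) (hh : ‖h‖ ≤ 1 / 10)
    (hu1 : ‖u - 1‖ ≤ ‖h‖) (hv1 : ‖v - 1‖ ≤ ‖h‖) : ‖u ^ 3 - v ^ 3 - 3 * h‖ ≤ 5 * ‖h‖ ^ 3 := by
  have h1 := norm_mul_sub_one_le hu hv hh hu1 hv1
  have h2 := norm_add_sub_two_le hu hv hh hu1 hv1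
  have h3 : 1 ≤ ‖u + v‖ := by
    have := norm_sub_norm_le (2 : ℂ) (-(u + v - 2))
    rw [norm_neg, show (2 : ℂ) - -(u + v - 2) = u + v by ring, Complex.norm_ofNat] at this
    nlinarith [norm_nonneg h]
  have h4 : (u ^ 3 - v ^ 3 - 3 * h) * (u + v) = h * (2 * (u * v - 1) - 3 * (u + v - 2)) := by
    linear_combination (u ^ 2 + u * v + v ^ 2) * (hu - hv) + 2 * h * (hu + hv)
  calc ‖u ^ 3 - v ^ 3 - 3 * h‖ ≤ ‖u ^ 3 - v ^ 3 - 3 * h‖ * ‖u + v‖ :=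
        le_mul_of_one_le_right (norm_nonneg _) h3
    _ = ‖h‖ * ‖2 * (u * v - 1) - 3 * (u + v - 2)‖ := by rw [← norm_mul, h4, norm_mul]
    _ ≤ ‖h‖ * (2 * ‖h‖ ^ 2 + 3 * ‖h‖ ^ 2) := by
        gcongr
        refine (norm_sub_le _ _).trans ?_
        rw [norm_mul, norm_mul, Complex.norm_ofNat, Complex.norm_ofNat]
        gcongr
    _ = _ := by ring

lemma norm_inv_cube_sub_inv_cube_le (hu : u ^ 2 = 1 + h) (hv : v ^ 2 = 1 - h)
    (hh : ‖h‖ ≤ 1 / 10) (hu1 : ‖u - 1‖ ≤ ‖h‖) (hv1 : ‖v - 1‖ ≤ ‖h‖) :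
    ‖u⁻¹ ^ 3 - v⁻¹ ^ 3‖ ≤ 32 * ‖h‖ := by
  have h1 := norm_mul_sub_one_le hu hv hh hu1 hv1
  have h2 := norm_cube_sub_cube_sub_le hu hv hh hu1 hv1
  have hsq : ‖h‖ ^ 2 ≤ 1 / 100 := by nlinarith [norm_nonneg h]
  have h3 := norm_inv_le_two (h1.trans (hsq.trans (by norm_num)))
  have hu0 : u ≠ 0 := by rintro rfl; norm_num at hu1; linarith
  have hv0 : v ≠ 0 := by rintro rfl; norm_num at hv1; linarith
  have h4 : ‖u ^ 3 - v ^ 3‖ ≤ 4 * ‖h‖ := by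
    calc ‖u ^ 3 - v ^ 3‖ = ‖(u ^ 3 - v ^ 3 - 3 * h) + 3 * h‖ := by congr 1; ring
      _ ≤ 5 * ‖h‖ ^ 3 + 3 * ‖h‖ := by
        refine (norm_add_le _ _).trans (add_le_add h2 ?_)
        rw [norm_mul, Complex.norm_ofNat]
      _ ≤ _ := by nlinarith [norm_nonneg h]
  calc ‖u⁻¹ ^ 3 - v⁻¹ ^ 3‖ = ‖-(u ^ 3 - v ^ 3) * ((u * v)⁻¹) ^ 3‖ := by
        congr 1; field_simp; ring
    _ ≤ 4 * ‖h‖ * 2 ^ 3 := by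
        rw [norm_mul, norm_neg, norm_pow]
        gcongr
    _ = _ := by ring

end SquareRoots

section Determinant

lemma norm_mul_sub_one_le_of_expansion {A B p q : ℂ} {ρ t : ℝ} (hA : ‖A - (1 - p)‖ ≤ ρ)
    (hB : ‖B - (1 + q)‖ ≤ ρ) (hp : ‖p‖ ≤ t) (hq : ‖q‖ ≤ t) (ht : t ≤ 1) (hρ : ρ ≤ 1) :
    ‖A * B - 1‖ ≤ 5 * ρ + t ^ 2 + ‖q - p‖ := by
  have ht0 : 0 ≤ t := (norm_nonneg _).trans hp
  have hρ0 : 0 ≤ ρ := (norm_nonneg _).trans hA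
  have hB3 : ‖B‖ ≤ 3 := by
    calc ‖B‖ = ‖(B - (1 + q)) + (1 + q)‖ := by congr 1; ring
      _ ≤ ρ + (1 + t) := (norm_add_le _ _).trans (add_le_add hB
          ((norm_add_le _ _).trans (by rw [norm_one]; gcongr)))
      _ ≤ 3 := by linarith
  have hp2 : ‖1 - p‖ ≤ 2 := (norm_sub_le _ _).trans (by rw [norm_one]; linarith)
  calc ‖A * B - 1‖ = ‖(A - (1 - p)) * B + (1 - p) * (B - (1 + q)) + -(p * q) + (q - p)‖ := by
        congr 1; ring
    _ ≤ ‖A - (1 - p)‖ * ‖B‖ + ‖1 - p‖ * ‖B - (1 + q)‖ + ‖p‖ * ‖q‖ + ‖q - p‖ := by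
        refine (norm_add_le _ _).trans (add_le_add_left ?_ _)
        refine (norm_add_le _ _).trans (add_le_add ?_ (by rw [norm_neg, norm_mul]))
        refine (norm_add_le _ _).trans (by rw [norm_mul, norm_mul])
    _ ≤ ρ * 3 + 2 * ρ + t * t + ‖q - p‖ := by gcongr
    _ = _ := by ring

lemma norm_mul_sub_one_le_three_mul {a b : ℂ} {d : ℝ} (ha : ‖a - 1‖ ≤ d) (hb : ‖b - 1‖ ≤ d)
    (hd : d ≤ 1) : ‖a * b - 1‖ ≤ 3 * d ∧ ‖a * b‖ ≤ 4 := by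
  have hd0 : 0 ≤ d := (norm_nonneg _).trans ha
  have h : ‖a * b - 1‖ ≤ 3 * d := by
    calc ‖a * b - 1‖ = ‖(a - 1) * (b - 1) + (a - 1) + (b - 1)‖ := by congr 1; ring
      _ ≤ ‖a - 1‖ * ‖b - 1‖ + ‖a - 1‖ + ‖b - 1‖ := by
        refine (norm_add_le _ _).trans (add_le_add_left ((norm_add_le _ _).trans ?_) _)
        rw [norm_mul]
      _ ≤ 1 * d + d + d := by gcongr; exact ha.trans hd
      _ = _ := by ring
  refine ⟨h, ?_⟩
  calc ‖a * b‖ = ‖(a * b - 1) + 1‖ := by congr 1; ring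
    _ ≤ 3 * d + 1 := (norm_add_le _ _).trans (by rw [norm_one]; gcongr)
    _ ≤ 4 := by linarith

/-- Perturbation of the algebraic expression for `F₂`, in which `U`, `V`, `G` and `P₁`, `P₂`,
`P₃` are all close to `1`. -/
lemma norm_determinant_sub_le {η : ℝ} (hη : 0 < η) {s U V P₁ P₂ P₃ E G : ℂ} {b d g : ℝ} (hs : s ≠ 0)
    (hUV : ‖U + V - 2‖ ≤ b) (hUV' : ‖U * V - 1‖ ≤ b) (hU : ‖U‖ ≤ 2) (hV : ‖V‖ ≤ 2)
    (h₁ : ‖P₁ - 1‖ ≤ d) (h₂ : ‖P₂ - 1‖ ≤ d) (h₃ : ‖P₃ - 1‖ ≤ d) (hd : d ≤ 1)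
    (hE : ‖E‖ ≤ 1) (hG : ‖G - 1‖ ≤ g) (hg : g ≤ 1) :
    ‖(1 + (Complex.I / 2 * (s⁻¹ * V) * P₁ + Complex.I / 2 * (s⁻¹ * U) * P₂) / η +
        ((Complex.I / 2 * (s⁻¹ * V) * P₁) * (Complex.I / 2 * (s⁻¹ * U) * P₂) -
          (Complex.I / 2) ^ 2 * (s⁻¹ ^ 2 * (U * V)) * (E * G) * P₃ ^ 2) / η ^ 2) -
      ((2 * η * s + Complex.I) ^ 2 + E) / (4 * s ^ 2 * η ^ 2)‖ ≤
      ‖s⁻¹‖ / (2 * η) * (b + 4 * d) + ‖s⁻¹‖ ^ 2 / (4 * η ^ 2) * (12 * b + 6 * d + 4 * g) := by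
  have hη' : (η : ℂ) ≠ 0 := by exact_mod_cast hη.ne'
  have hb0 : 0 ≤ b := (norm_nonneg _).trans hUV
  have hd0 : 0 ≤ d := (norm_nonneg _).trans h₁
  have hg0 : 0 ≤ g := (norm_nonneg _).trans hG
  obtain ⟨h12, h12'⟩ := norm_mul_sub_one_le_three_mul h₁ h₂ hd
  obtain ⟨h33, h33'⟩ := norm_mul_sub_one_le_three_mul h₃ h₃ hd
  have hG2 : ‖G‖ ≤ 2 := by
    calc ‖G‖ = ‖(G - 1) + 1‖ := by congr 1; ring
      _ ≤ g + 1 := (norm_add_le _ _).trans (by rw [norm_one]; gcongr)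
      _ ≤ 2 := by linarith
  have e1 : ‖(U + V - 2) + V * (P₁ - 1) + U * (P₂ - 1)‖ ≤ b + 4 * d := by
    calc _ ≤ ‖U + V - 2‖ + ‖V‖ * ‖P₁ - 1‖ + ‖U‖ * ‖P₂ - 1‖ := by
          refine (norm_add_le _ _).trans (add_le_add ((norm_add_le _ _).trans ?_) ?_) <;>
            simp only [norm_mul, le_refl]
      _ ≤ b + 2 * d + 2 * d := by gcongr
      _ = _ := by ring
  have e2 : ‖(U * V - 1) * (P₁ * P₂) + (P₁ * P₂ - 1)‖ ≤ 4 * b + 3 * d := by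
    calc _ ≤ ‖U * V - 1‖ * ‖P₁ * P₂‖ + ‖P₁ * P₂ - 1‖ :=
          (norm_add_le _ _).trans (by rw [norm_mul])
      _ ≤ b * 4 + 3 * d := by gcongr
      _ = _ := by ring
  have e3 : ‖((U * V - 1) * (G * (P₃ * P₃)) + (G - 1) * (P₃ * P₃) + (P₃ * P₃ - 1)) * E‖ ≤
      8 * b + 4 * g + 3 * d := by
    rw [norm_mul]
    refine (mul_le_of_le_one_right (norm_nonneg _) hE).trans ?_
    calc _ ≤ ‖U * V - 1‖ * (‖G‖ * ‖P₃ * P₃‖) + ‖G - 1‖ * ‖P₃ * P₃‖ + ‖P₃ * P₃ - 1‖ := by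
          refine (norm_add_le _ _).trans (add_le_add_left ((norm_add_le _ _).trans ?_) _)
          rw [norm_mul, norm_mul, norm_mul (G - 1)]
      _ ≤ b * (2 * 4) + g * 4 + 3 * d := by gcongr
      _ = _ := by ring
  have key : (1 + (Complex.I / 2 * (s⁻¹ * V) * P₁ + Complex.I / 2 * (s⁻¹ * U) * P₂) / η +
        ((Complex.I / 2 * (s⁻¹ * V) * P₁) * (Complex.I / 2 * (s⁻¹ * U) * P₂) -
          (Complex.I / 2) ^ 2 * (s⁻¹ ^ 2 * (U * V)) * (E * G) * P₃ ^ 2) / η ^ 2) -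
      ((2 * η * s + Complex.I) ^ 2 + E) / (4 * s ^ 2 * η ^ 2) =
      Complex.I * (s⁻¹ / (2 * η)) * ((U + V - 2) + V * (P₁ - 1) + U * (P₂ - 1)) +
      s⁻¹ ^ 2 / (4 * η ^ 2) *
        (-((U * V - 1) * (P₁ * P₂) + (P₁ * P₂ - 1)) +
          ((U * V - 1) * (G * (P₃ * P₃)) + (G - 1) * (P₃ * P₃) + (P₃ * P₃ - 1)) * E) := by
    field_simp
    have hI := Complex.I_sq
    linear_combination (4 * U * V * P₁ * P₂ - 4 * U * V * E * G * P₃ ^ 2 - 4) * hI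
  rw [key]
  calc _ ≤ ‖s⁻¹ / (2 * η)‖ * (b + 4 * d) + ‖s⁻¹ ^ 2 / (4 * η ^ 2)‖ *
        ((4 * b + 3 * d) + (8 * b + 4 * g + 3 * d)) := by
        refine (norm_add_le _ _).trans ?_
        rw [norm_mul, norm_mul, norm_mul, Complex.norm_I, one_mul]
        gcongr
        refine (norm_add_le _ _).trans ?_
        rw [norm_neg]
        gcongr
    _ = _ := by
      rw [norm_div, norm_div, norm_mul, norm_mul, norm_pow, norm_pow, Complex.norm_ofNat,
        Complex.norm_ofNat, Complex.norm_of_nonneg hη.le]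
      ring

end Determinant

section Reduction

lemma Df_eq_of_exp_eq {κ η f : ℝ} {z μ ν : ℂ} (hμ : Complex.exp μ = z + κ * f)
    (hν : Complex.exp ν = z - κ * f) {B : ℂ → ℂ → ℂ}
    (hB : ∀ x y, B x y = Ai (-ωc * Complex.exp x * ((f ^ (-(2 : ℝ) / 3) : ℝ) : ℂ)) *
      Ai (-Complex.exp y * ((f ^ (-(2 : ℝ) / 3) : ℝ) : ℂ)) / Wf f) :
    Df κ η f z = 1 + (B ν ν + B μ μ) / η + (B ν ν * B μ μ - B μ ν ^ 2) / η ^ 2 := by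
  simp only [hB, Df, alphaP, alphaM, betaP, betaM, hμ, hν]
  ring

/-- The product of Airy amplitudes entering `D_f`. -/
noncomputable def ampProd (f : ℝ) (μ ν : ℂ) : ℂ :=
  airyAmp (airyArg f (π / 6) μ) * airyAmp (airyArg f (π / 2) ν)

lemma exp_add_log {m h : ℂ} (hh : ‖h‖ < 1) :
    Complex.exp (m + Complex.log (1 + h)) = Complex.exp m + h * Complex.exp m := by
  rw [Complex.exp_add, Complex.exp_log (one_add_ne_zero_of_norm_lt hh)]; ring

lemma exp_three_halves_mul_add_log (m h : ℂ) :
    Complex.exp (3 * (m + Complex.log (1 + h)) / 2) =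
      Complex.exp (m / 2) ^ 3 * sqrtOneAdd h ^ 3 := by
  rw [sqrtOneAdd, ← Complex.exp_nat_mul, ← Complex.exp_nat_mul, ← Complex.exp_add]
  push_cast; ring_nf

lemma Df_eq_ampProd {κ η f : ℝ} (hf : 0 < f) {m h : ℂ} (hh : ‖h‖ < 1)
    (hm : h * Complex.exp m = κ * f) :
    Df κ η f (Complex.exp m) =
      1 + (Complex.I / 2 * ((Complex.exp (m / 2))⁻¹ * (sqrtOneAdd (-h))⁻¹) *
            ampProd f (m + Complex.log (1 + -h)) (m + Complex.log (1 + -h)) +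
          Complex.I / 2 * ((Complex.exp (m / 2))⁻¹ * (sqrtOneAdd h)⁻¹) *
            ampProd f (m + Complex.log (1 + h)) (m + Complex.log (1 + h))) / η +
        ((Complex.I / 2 * ((Complex.exp (m / 2))⁻¹ * (sqrtOneAdd (-h))⁻¹) *
            ampProd f (m + Complex.log (1 + -h)) (m + Complex.log (1 + -h))) *
          (Complex.I / 2 * ((Complex.exp (m / 2))⁻¹ * (sqrtOneAdd h)⁻¹) *
            ampProd f (m + Complex.log (1 + h)) (m + Complex.log (1 + h))) -
          (Complex.I / 2) ^ 2 * ((Complex.exp (m / 2))⁻¹ ^ 2 *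
            ((sqrtOneAdd h)⁻¹ * (sqrtOneAdd (-h))⁻¹)) *
            (Complex.exp (4 * Complex.I * κ * Complex.exp (m / 2)) *
              Complex.exp (4 * Complex.I / (3 * f) * (Complex.exp (m / 2) ^ 3 *
                (sqrtOneAdd h ^ 3 - sqrtOneAdd (-h) ^ 3 - 3 * h)))) *
            ampProd f (m + Complex.log (1 + h)) (m + Complex.log (1 + -h)) ^ 2) / η ^ 2 := by
  have hh' : ‖-h‖ < 1 := by rwa [norm_neg]
  have hp : Complex.exp (m + Complex.log (1 + h)) = Complex.exp m + κ * f := by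
    rw [exp_add_log hh, hm]
  have hn : Complex.exp (m + Complex.log (1 + -h)) = Complex.exp m - κ * f := by
    rw [exp_add_log hh', neg_mul, hm, sub_eq_add_neg]
  rw [Df_eq_of_exp_eq hp hn (fun x y => (Ai_mul_Ai_div_Wf hf x y).symm)]
  have hdiag (k : ℂ) : Complex.exp (-(m + Complex.log (1 + k) + (m + Complex.log (1 + k))) / 4) =
      (Complex.exp (m / 2))⁻¹ * (sqrtOneAdd k)⁻¹ := by
    rw [sqrtOneAdd, ← Complex.exp_neg, ← Complex.exp_neg, ← Complex.exp_add]; ring_nf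
  have hoff : Complex.exp (-(m + Complex.log (1 + h) + (m + Complex.log (1 + -h))) / 4) ^ 2 =
      (Complex.exp (m / 2))⁻¹ ^ 2 * ((sqrtOneAdd h)⁻¹ * (sqrtOneAdd (-h))⁻¹) := by
    rw [sqrtOneAdd, sqrtOneAdd, ← Complex.exp_neg, ← Complex.exp_neg, ← Complex.exp_neg,
      ← Complex.exp_nat_mul, ← Complex.exp_nat_mul, ← Complex.exp_add, ← Complex.exp_add]
    push_cast; ring_nf
  have hfc : (f : ℂ) ≠ 0 := by exact_mod_cast hf.ne'
  have hs2 : Complex.exp (m / 2) ^ 2 = Complex.exp m := by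
    rw [← Complex.exp_nat_mul]; push_cast; ring_nf
  have hexp : Complex.exp (2 * Complex.I / (3 * f) *
        (Complex.exp (m / 2) ^ 3 * sqrtOneAdd h ^ 3 -
          Complex.exp (m / 2) ^ 3 * sqrtOneAdd (-h) ^ 3)) ^ 2 =
      Complex.exp (4 * Complex.I * κ * Complex.exp (m / 2)) *
        Complex.exp (4 * Complex.I / (3 * f) * (Complex.exp (m / 2) ^ 3 *
          (sqrtOneAdd h ^ 3 - sqrtOneAdd (-h) ^ 3 - 3 * h))) := by
    rw [← Complex.exp_nat_mul, ← Complex.exp_add]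
    congr 1
    push_cast
    rw [← hs2] at hm
    field_simp
    linear_combination 12 * hm
  simp only [ampProd, hdiag, sub_self, mul_zero, Complex.exp_zero, mul_one,
    exp_three_halves_mul_add_log, mul_pow, hoff, hexp]

end Reduction

section Estimate

/-- Two-term asymptotics of both rotated Airy amplitudes at the logarithmic coordinate `μ`, with
constant `A`. -/
def AmpBounds (A f : ℝ) (μ : ℂ) : Prop :=
  ‖airyAmp (airyArg f (π / 2) μ) - (1 + airyConst * Complex.I * (f * Complex.exp (-3 * μ / 2)))‖
      ≤ A * (f ^ 2 * Real.exp (-3 * μ.re)) ∧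
  ‖airyAmp (airyArg f (π / 6) μ) - (1 - airyConst * Complex.I * (f * Complex.exp (-3 * μ / 2)))‖
      ≤ A * (f ^ 2 * Real.exp (-3 * μ.re))

lemma exp_neg_three_halves_mul_add_log (m h : ℂ) :
    Complex.exp (-3 * (m + Complex.log (1 + h)) / 2) =
      (Complex.exp (m / 2))⁻¹ ^ 3 * (sqrtOneAdd h)⁻¹ ^ 3 := by
  rw [inv_pow, inv_pow, ← mul_inv, ← exp_three_halves_mul_add_log, ← Complex.exp_neg]
  ring_nf

lemma norm_exp_neg_three_halves_sq (μ : ℂ) :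
    Real.exp (-3 * μ.re) = ‖Complex.exp (-3 * μ / 2)‖ ^ 2 := by
  rw [Complex.norm_exp, ← Real.exp_nat_mul]
  congr 1
  have : (-3 * μ / 2).re = -3 * μ.re / 2 := by simp
  rw [this]; push_cast; ring

lemma norm_ampProd_sub_one_le {A f y : ℝ} (hA : 0 < A) (hf : 0 < f) {m k₁ k₂ : ℂ}
    (hy : ‖(Complex.exp (m / 2))⁻¹‖ = y)
    (h₁ : AmpBounds A f (m + Complex.log (1 + k₁))) (h₂ : AmpBounds A f (m + Complex.log (1 + k₂)))
    (hk₁ : ‖(sqrtOneAdd k₁)⁻¹‖ ≤ 2) (hk₂ : ‖(sqrtOneAdd k₂)⁻¹‖ ≤ 2)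
    (ht : ‖airyConst‖ * (8 * (f * y ^ 3)) ≤ 1) (hρ : A * (64 * (f * y ^ 3) ^ 2) ≤ 1) :
    ‖ampProd f (m + Complex.log (1 + k₁)) (m + Complex.log (1 + k₂)) - 1‖ ≤
      5 * (A * (64 * (f * y ^ 3) ^ 2)) + (‖airyConst‖ * (8 * (f * y ^ 3))) ^ 2 +
      ‖airyConst‖ * (f * y ^ 3 * ‖(sqrtOneAdd k₂)⁻¹ ^ 3 - (sqrtOneAdd k₁)⁻¹ ^ 3‖) := by
  have hy0 : 0 ≤ y := hy ▸ norm_nonneg _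
  have hfn : ‖(f : ℂ)‖ = f := Complex.norm_of_nonneg hf.le
  have hX (k : ℂ) (hk : ‖(sqrtOneAdd k)⁻¹‖ ≤ 2) :
      ‖Complex.exp (-3 * (m + Complex.log (1 + k)) / 2)‖ ≤ 8 * y ^ 3 := by
    rw [exp_neg_three_halves_mul_add_log, norm_mul, norm_pow, norm_pow, hy]
    calc y ^ 3 * ‖(sqrtOneAdd k)⁻¹‖ ^ 3 ≤ y ^ 3 * 2 ^ 3 := by gcongr
      _ = _ := by ring
  have hp (k : ℂ) (hk : ‖(sqrtOneAdd k)⁻¹‖ ≤ 2) :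
      ‖airyConst * Complex.I * (f * Complex.exp (-3 * (m + Complex.log (1 + k)) / 2))‖ ≤
        ‖airyConst‖ * (8 * (f * y ^ 3)) := by
    rw [norm_mul, norm_mul, norm_mul, Complex.norm_I, hfn, mul_one]
    refine mul_le_mul_of_nonneg_left ?_ (norm_nonneg _)
    calc f * _ ≤ f * (8 * y ^ 3) := by gcongr; exact hX k hk
      _ = _ := by ring
  have hr (k : ℂ) (hk : ‖(sqrtOneAdd k)⁻¹‖ ≤ 2) :
      A * (f ^ 2 * Real.exp (-3 * (m + Complex.log (1 + k)).re)) ≤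
        A * (64 * (f * y ^ 3) ^ 2) := by
    refine mul_le_mul_of_nonneg_left ?_ hA.le
    rw [norm_exp_neg_three_halves_sq]
    calc f ^ 2 * _ ^ 2 ≤ f ^ 2 * (8 * y ^ 3) ^ 2 := by gcongr; exact hX k hk
      _ = _ := by ring
  refine (norm_mul_sub_one_le_of_expansion (h₁.2.trans (hr k₁ hk₁)) (h₂.1.trans (hr k₂ hk₂))
    (hp k₁ hk₁) (hp k₂ hk₂) ht hρ).trans ?_
  refine add_le_add_right (le_of_eq ?_) _
  rw [← mul_sub, ← mul_sub, exp_neg_three_halves_mul_add_log, exp_neg_three_halves_mul_add_log,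
    ← mul_sub, norm_mul, norm_mul, norm_mul, norm_mul, norm_pow, hy, Complex.norm_I, hfn, mul_one,
    mul_assoc f]

set_option maxHeartbeats 1000000 in
lemma exists_Df_estimate {κ η A : ℝ} (hκ : 0 < κ) (hη : 0 < η) (hA : 0 < A) :
    ∃ ε > (0 : ℝ), ∃ C > (0 : ℝ), ∀ (f y : ℝ) (m h : ℂ), 0 < f → f ≤ ε → f * y ^ 3 ≤ ε →
      ‖(Complex.exp (m / 2))⁻¹‖ = y → 0 ≤ (Complex.exp (m / 2)).im →
      h * Complex.exp m = κ * f → AmpBounds A f (m + Complex.log (1 + h)) →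
      AmpBounds A f (m + Complex.log (1 + -h)) →
      ‖Df κ η f (Complex.exp m) - ((2 * η * Complex.exp (m / 2) + Complex.I) ^ 2 +
        Complex.exp (4 * Complex.I * κ * Complex.exp (m / 2))) / (4 * Complex.exp m * η ^ 2)‖ ≤
        C * (f ^ 2 * (y ^ 5 + y ^ 8)) := by
  set c := ‖airyConst‖ with hc
  have hc0 : 0 ≤ c := norm_nonneg _
  set K := 320 * A + 64 * c ^ 2 + 32 * c * κ with hK
  have hK0 : 0 ≤ K := by positivity
  set N := 1 + K + c + A + κ + κ ^ 3 with hN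
  have hN1 : 0 < N := by positivity
  refine ⟨1 / (100 * N), by positivity,
    (6 * κ ^ 2 + 8 * K) / (2 * η) + (72 * κ ^ 2 + 12 * K + 56 * κ ^ 3) / (4 * η ^ 2),
    by positivity, fun f y m h hf hfε hyε hy him hh hp hn => ?_⟩
  set ε := 1 / (100 * N) with hε
  have hεN : ε * N = 1 / 100 := by rw [hε]; field_simp
  have hε0 : 0 < ε := by positivity
  have hεb {x : ℝ} (hx : x ≤ N) : ε * x ≤ 1 / 100 := by
    rw [← hεN]; gcongr
  have hκ3 : 0 < κ ^ 3 := by positivity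
  have hε1 : ε ≤ 1 / 100 := by simpa using hεb (x := 1) (by linarith)
  have hεK : ε * K ≤ 1 / 100 := hεb (by linarith)
  have hεc : ε * c ≤ 1 / 100 := hεb (by linarith)
  have hεA : ε * A ≤ 1 / 100 := hεb (by linarith)
  have hεκ : ε * κ ≤ 1 / 100 := hεb (by linarith)
  have hεκ3 : ε * κ ^ 3 ≤ 1 / 100 := hεb (by linarith)
  have hy0 : 0 < y := hy ▸ norm_pos_iff.2 (inv_ne_zero (Complex.exp_ne_zero _))
  set s := Complex.exp (m / 2) with hs
  have hs0 : s ≠ 0 := Complex.exp_ne_zero _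
  have hs2 : s ^ 2 = Complex.exp m := by
    rw [hs, ← Complex.exp_nat_mul]; push_cast; ring_nf
  have hsy : ‖s‖ = y⁻¹ := by rw [← hy, norm_inv, inv_inv]
  have hhn : ‖h‖ = κ * (f * y ^ 2) := by
    have : h = κ * f * s⁻¹ ^ 2 := by rw [← hh, ← hs2]; field_simp
    rw [this, norm_mul, norm_pow, hy, norm_mul, Complex.norm_of_nonneg hf.le,
      Complex.norm_of_nonneg hκ.le]
    ring
  have hfy2 : f * y ^ 2 ≤ 2 * ε := by
    have : y ^ 2 ≤ 1 + y ^ 3 := by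
      rcases le_total y 1 with h1 | h1
      · nlinarith [pow_pos hy0 3]
      · nlinarith [sq_nonneg y]
    nlinarith
  have hfy6 : (f * y ^ 3) ^ 2 ≤ ε * (1 / 100) := by
    rw [sq]; exact mul_le_mul hyε (hyε.trans hε1) (by positivity) hε0.le
  have hf2 : f ^ 2 ≤ ε * (1 / 100) := by
    rw [sq]; exact mul_le_mul hfε (hfε.trans hε1) hf.le hε0.le
  have hh10 : ‖h‖ ≤ 1 / 10 := by
    rw [hhn]
    calc κ * (f * y ^ 2) ≤ κ * (2 * ε) := by gcongr
      _ ≤ _ := by linarith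
  have hh1 : ‖h‖ < 1 := by linarith
  have hh1' : ‖-h‖ < 1 := by rwa [norm_neg]
  have hu := sqrtOneAdd_sq hh1
  have hv := sqrtOneAdd_sq hh1'
  rw [← sub_eq_add_neg] at hv
  have hu1 := norm_sqrtOneAdd_sub_one_le hh1
  have hv1 := norm_sqrtOneAdd_sub_one_le hh1'
  rw [norm_neg] at hv1
  have hU2 : ‖(sqrtOneAdd h)⁻¹‖ ≤ 2 := norm_inv_le_two (by linarith)
  have hV2 : ‖(sqrtOneAdd (-h))⁻¹‖ ≤ 2 := norm_inv_le_two (by linarith)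
  have ht : c * (8 * (f * y ^ 3)) ≤ 1 := by
    calc c * (8 * (f * y ^ 3)) ≤ c * (8 * ε) := by gcongr
      _ ≤ 1 := by linarith
  have hρ : A * (64 * (f * y ^ 3) ^ 2) ≤ 1 := by
    calc A * (64 * (f * y ^ 3) ^ 2) ≤ A * (64 * (ε * (1 / 100))) := by gcongr
      _ ≤ 1 := by linarith
  obtain ⟨hb1, hb2⟩ := norm_inv_add_inv_sub_two_le hu hv hh10 hu1 hv1
  have hcube := norm_cube_sub_cube_sub_le hu hv hh10 hu1 hv1
  have hicube := norm_inv_cube_sub_inv_cube_le hu hv hh10 hu1 hv1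
  have hd_of {k₁ k₂ : ℂ} (hb : ‖ampProd f (m + Complex.log (1 + k₁)) (m + Complex.log (1 + k₂)) - 1‖
        ≤ 5 * (A * (64 * (f * y ^ 3) ^ 2)) + (c * (8 * (f * y ^ 3))) ^ 2 +
        c * (f * y ^ 3 * ‖(sqrtOneAdd k₂)⁻¹ ^ 3 - (sqrtOneAdd k₁)⁻¹ ^ 3‖))
      (hk : ‖(sqrtOneAdd k₂)⁻¹ ^ 3 - (sqrtOneAdd k₁)⁻¹ ^ 3‖ ≤ 32 * ‖h‖) :
      ‖ampProd f (m + Complex.log (1 + k₁)) (m + Complex.log (1 + k₂)) - 1‖ ≤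
        K * (f ^ 2 * (y ^ 5 + y ^ 6)) := by
    calc _ ≤ _ := hb
      _ ≤ 5 * (A * (64 * (f * y ^ 3) ^ 2)) + (c * (8 * (f * y ^ 3))) ^ 2 +
          c * (f * y ^ 3 * (32 * ‖h‖)) := by gcongr
      _ = (320 * A + 64 * c ^ 2) * (f ^ 2 * y ^ 6) + 32 * c * κ * (f ^ 2 * y ^ 5) := by
          rw [hhn]; ring
      _ ≤ (320 * A + 64 * c ^ 2) * (f ^ 2 * y ^ 6) + 32 * c * κ * (f ^ 2 * y ^ 5) +
          ((320 * A + 64 * c ^ 2) * (f ^ 2 * y ^ 5) + 32 * c * κ * (f ^ 2 * y ^ 6)) :=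
          le_add_of_nonneg_right (by positivity)
      _ = _ := by rw [hK]; ring
  have hP₁ := hd_of (norm_ampProd_sub_one_le hA hf hy hn hn hV2 hV2 ht hρ) (by simp)
  have hP₂ := hd_of (norm_ampProd_sub_one_le hA hf hy hp hp hU2 hU2 ht hρ) (by simp)
  have hP₃ := hd_of (norm_ampProd_sub_one_le hA hf hy hp hn hU2 hV2 ht hρ)
    (by rwa [norm_sub_rev])
  have hd1 : K * (f ^ 2 * (y ^ 5 + y ^ 6)) ≤ 1 := by
    have h56 : y ^ 5 ≤ 1 + y ^ 6 := by
      rcases le_total y 1 with h1 | h1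
      · have := pow_le_one₀ (n := 5) hy0.le h1
        linarith [pow_pos hy0 6]
      · have := pow_le_pow_right₀ h1 (show 5 ≤ 6 by norm_num)
        linarith
    calc K * (f ^ 2 * (y ^ 5 + y ^ 6)) ≤ K * (f ^ 2 * ((1 + y ^ 6) + y ^ 6)) := by gcongr
      _ = K * (f ^ 2 + 2 * (f * y ^ 3) ^ 2) := by ring
      _ ≤ K * (ε * (1 / 100) + 2 * (ε * (1 / 100))) := by gcongr
      _ ≤ 1 := by linarith
  have hE : ‖Complex.exp (4 * Complex.I * κ * s)‖ ≤ 1 := by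
    rw [Complex.norm_exp, Real.exp_le_one_iff]
    have : (4 * Complex.I * κ * s).re = -(4 * κ * s.im) := by
      simp
    rw [this]
    have := mul_nonneg (mul_nonneg zero_le_four hκ.le) him
    linarith
  set e := 4 * Complex.I / (3 * f) * (s ^ 3 *
    (sqrtOneAdd h ^ 3 - sqrtOneAdd (-h) ^ 3 - 3 * h)) with he
  have hen : ‖e‖ ≤ 7 * κ ^ 3 * (f ^ 2 * y ^ 3) := by
    rw [he, norm_mul, norm_div, norm_mul, norm_mul, norm_mul, norm_pow, Complex.norm_I, hsy,
      Complex.norm_of_nonneg hf.le, Complex.norm_ofNat, Complex.norm_ofNat]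
    calc 4 * 1 / (3 * f) * (y⁻¹ ^ 3 * _) ≤ 4 * 1 / (3 * f) * (y⁻¹ ^ 3 * (5 * ‖h‖ ^ 3)) := by gcongr
      _ = 20 / 3 * κ ^ 3 * (f ^ 2 * y ^ 3) := by rw [hhn]; field_simp; ring
      _ ≤ _ := by gcongr; norm_num
  have hg1 : 14 * κ ^ 3 * (f ^ 2 * y ^ 3) ≤ 1 := by
    calc 14 * κ ^ 3 * (f ^ 2 * y ^ 3) = 14 * κ ^ 3 * (f * (f * y ^ 3)) := by ring
      _ ≤ 14 * κ ^ 3 * (ε * (1 / 100)) := by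
        gcongr; exact hyε.trans hε1
      _ ≤ 1 := by linarith
  have hG : ‖Complex.exp e - 1‖ ≤ 14 * κ ^ 3 * (f ^ 2 * y ^ 3) := by
    refine (Complex.norm_exp_sub_one_le (by linarith)).trans ?_
    linarith
  rw [Df_eq_ampProd hf hh1 hh, ← hs2]
  refine (norm_determinant_sub_le hη hs0 hb1 hb2 hU2 hV2 hP₁ hP₂ hP₃ hd1 hE hG hg1).trans ?_
  rw [hy, hhn]
  have hpow (k : ℕ) (h5 : 5 ≤ k) (h8 : k ≤ 8) : y ^ k ≤ y ^ 5 + y ^ 8 := by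
    rcases le_total y 1 with h1 | h1
    · linarith [pow_le_pow_of_le_one hy0.le h1 h5, pow_pos hy0 8]
    · linarith [pow_le_pow_right₀ h1 h8, pow_pos hy0 5]
  have h6 := hpow 6 (by norm_num) (by norm_num)
  have h7 := hpow 7 (by norm_num) (by norm_num)
  have h5 := hpow 5 le_rfl (by norm_num)
  have h8 := hpow 8 (by norm_num) le_rfl
  calc _ = (6 * κ ^ 2 * (f ^ 2 * y ^ 5) + 4 * K * (f ^ 2 * y ^ 6) + 4 * K * (f ^ 2 * y ^ 7)) /
          (2 * η) + (72 * κ ^ 2 * (f ^ 2 * y ^ 6) + 6 * K * (f ^ 2 * y ^ 7) +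
          6 * K * (f ^ 2 * y ^ 8) + 56 * κ ^ 3 * (f ^ 2 * y ^ 5)) / (4 * η ^ 2) := by
        ring
    _ ≤ (6 * κ ^ 2 * (f ^ 2 * (y ^ 5 + y ^ 8)) + 4 * K * (f ^ 2 * (y ^ 5 + y ^ 8)) +
          4 * K * (f ^ 2 * (y ^ 5 + y ^ 8))) /
          (2 * η) + (72 * κ ^ 2 * (f ^ 2 * (y ^ 5 + y ^ 8)) + 6 * K * (f ^ 2 * (y ^ 5 + y ^ 8)) +
          6 * K * (f ^ 2 * (y ^ 5 + y ^ 8)) + 56 * κ ^ 3 * (f ^ 2 * (y ^ 5 + y ^ 8))) /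
          (4 * η ^ 2) := by gcongr
    _ = _ := by ring

end Estimate

section Region

lemma abs_log_one_add_im_le {k : ℂ} (hk : ‖k‖ ≤ 1 / 10) :
    |(Complex.log (1 + k)).im| ≤ 3 * |k.im| := by
  have hre : 0 < (1 + k).re := by
    have := (abs_le.1 ((Complex.abs_re_le_norm k).trans hk)).1
    simp only [Complex.add_re, Complex.one_re]; linarith
  have h0 : (1 + k) ≠ 0 := by rintro h; simp [h] at hre
  have hn : 9 / 10 ≤ ‖1 + k‖ := by
    have := norm_sub_norm_le (1 : ℂ) (-k)
    rw [norm_one, norm_neg, sub_neg_eq_add] at this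
    linarith
  have harg : |(1 + k).arg| ≤ π / 2 := Complex.abs_arg_le_pi_div_two_iff.2 hre.le
  have h1 := Real.mul_abs_le_abs_sin harg
  rw [Complex.sin_arg, abs_div, abs_norm] at h1
  have him : (1 + k).im = k.im := by simp
  rw [him, le_div_iff₀ (by linarith)] at h1
  rw [Complex.log_im]
  have hpi := Real.pi_lt_d2
  have hpi0 := Real.pi_pos
  have h2 : 2 / π * |(1 + k).arg| * (9 / 10) ≤ |k.im| := by
    refine le_trans ?_ h1
    gcongr
  have h3 : 2 / 3.15 ≤ 2 / π := by gcongr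
  have h4 : 2 / 3.15 * |(1 + k).arg| * (9 / 10) ≤ |k.im| := by
    refine le_trans ?_ h2
    gcongr
  norm_num at h4
  linarith [abs_nonneg (1 + k).arg]

lemma three_halves_exp_ge {x : ℝ} (hx : 9 / 10 ≤ Real.exp x) :
    81 / 100 ≤ Real.exp (3 * x / 2) := by
  rcases le_total 0 x with h | h
  · have := Real.one_le_exp (show 0 ≤ 3 * x / 2 by linarith)
    linarith
  · have h1 : Real.exp (2 * x) ≤ Real.exp (3 * x / 2) := Real.exp_le_exp.2 (by linarith)
    have h2 : Real.exp (2 * x) = Real.exp x ^ 2 := by rw [← Real.exp_nat_mul]; norm_num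
    nlinarith

/-- In the region between the critical rays the two shifted points `z ± κf` satisfy the
requirements of the Airy asymptotics. -/
lemma airyArg_conditions {κ M f L y τ : ℝ} {m k : ℂ} (hf : 0 < f) (hM : 20 < M)
    (hy : y = Real.exp (-m.re / 2)) (hk : k = τ * Complex.exp (-m)) (hτ : |τ| = κ * f)
    (hκy : κ * (f * y ^ 2) ≤ 1 / 10) (hfy : f * y ^ 3 ≤ 1 / 2) (hL1 : 1 ≤ L) (hLκ : 3 * κ ≤ L)
    (hLf : -Real.log f ≤ L) (hLm : m.re ≤ L) (h1 : y ^ 3 * M * f * L < m.im)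
    (h2 : m.im < 4 * π / 3 - (1 + y) * y ^ 2 * M * f * L) :
    0 < (m + Complex.log (1 + k)).im ∧ (m + Complex.log (1 + k)).im < 4 * π / 3 ∧
    0 ≤ 3 * (m + Complex.log (1 + k)).re - 2 * Real.log f ∧
    3 * (m + Complex.log (1 + k)).re - 2 * Real.log f ≤
      4 / π * (Real.exp (3 * (m + Complex.log (1 + k)).re / 2) / f) *
        (m + Complex.log (1 + k)).im ∧
    3 * (m + Complex.log (1 + k)).re - 2 * Real.log f ≤
      4 / π * (Real.exp (3 * (m + Complex.log (1 + k)).re / 2) / f) *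
        (4 * π / 3 - (m + Complex.log (1 + k)).im) := by
  have hy0 : 0 < y := hy ▸ Real.exp_pos _
  have hy2 : Real.exp (-m.re) = y ^ 2 := by rw [hy, ← Real.exp_nat_mul]; push_cast; ring_nf
  have hkn : ‖k‖ = κ * (f * y ^ 2) := by
    rw [hk, norm_mul, Complex.norm_real, Real.norm_eq_abs, hτ, Complex.norm_exp, Complex.neg_re,
      hy2]
    ring
  have hk10 : ‖k‖ ≤ 1 / 10 := hkn ▸ hκy
  have hT0 : 0 < y ^ 3 * M * f * L := by positivity
  have him0 : 0 < m.im := hT0.trans h1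
  have hkim : |k.im| ≤ ‖k‖ * |Real.sin m.im| := by
    rw [hkn, hk, Complex.im_ofReal_mul, Complex.exp_im, Complex.neg_re,
      Complex.neg_im, hy2, Real.sin_neg, abs_mul, hτ, abs_mul, abs_neg, abs_of_pos (pow_pos hy0 2)]
    linarith
  have hψ := abs_log_one_add_im_le hk10
  have hψ1 : |(Complex.log (1 + k)).im| ≤ 3 * (κ * (f * y ^ 2)) := by
    refine hψ.trans ?_
    have := mul_le_of_le_one_right (norm_nonneg k) (Real.abs_sin_le_one m.im)
    linarith
  have hψ2 : |(Complex.log (1 + k)).im| ≤ m.im / 2 := by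
    refine hψ.trans ?_
    have h3 : |Real.sin m.im| ≤ m.im := by
      have := Real.abs_sin_le_abs (x := m.im)
      rwa [abs_of_pos him0] at this
    have h4 : ‖k‖ * |Real.sin m.im| ≤ 1 / 10 * m.im := by gcongr
    linarith
  set φ := (m + Complex.log (1 + k)).im with hφ
  have hφe : φ = m.im + (Complex.log (1 + k)).im := by rw [hφ, Complex.add_im]
  have hφ1 : y ^ 3 * M * f * L / 2 ≤ φ := by
    have := (abs_le.1 hψ2).1
    linarith
  have hφ2 : y ^ 3 * M * f * L / 2 ≤ 4 * π / 3 - φ := by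
    have h3 := (abs_le.1 hψ1).2
    have h4 : 3 * (κ * (f * y ^ 2)) ≤ y ^ 2 * M * f * L := by
      have h5 : 3 * κ ≤ M * L := by nlinarith
      calc 3 * (κ * (f * y ^ 2)) = 3 * κ * (f * y ^ 2) := by ring
        _ ≤ M * L * (f * y ^ 2) := by gcongr
        _ = _ := by ring
    have h5 : (1 + y) * y ^ 2 * M * f * L = y ^ 2 * M * f * L + y ^ 3 * M * f * L := by ring
    linarith
  have hnk : 9 / 10 ≤ ‖1 + k‖ := by
    have := norm_sub_norm_le (1 : ℂ) (-k)
    rw [norm_one, norm_neg, sub_neg_eq_add] at this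
    linarith
  have hnk' : ‖1 + k‖ ≤ 2 := (norm_add_le _ _).trans (by rw [norm_one]; linarith)
  set x := (Complex.log (1 + k)).re with hx
  have hxe : Real.exp x = ‖1 + k‖ := by
    rw [hx, Complex.log_re, Real.exp_log (by linarith)]
  have hre : (m + Complex.log (1 + k)).re = m.re + x := by rw [Complex.add_re]
  rw [hre]
  have hq := three_halves_exp_ge (hxe ▸ hnk)
  have hy3 : Real.exp (3 * m.re / 2) = (y ^ 3)⁻¹ := by
    rw [hy, ← Real.exp_nat_mul, ← Real.exp_neg]; push_cast; ring_nf
  have hexp : Real.exp (3 * (m.re + x) / 2) = (y ^ 3)⁻¹ * Real.exp (3 * x / 2) := by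
    rw [← hy3, ← Real.exp_add]; ring_nf
  have hpos : 0 ≤ 3 * (m.re + x) - 2 * Real.log f := by
    have h3 : Real.exp (Real.log f) ≤ Real.exp (3 * (m.re + x) / 2) := by
      rw [Real.exp_log hf, hexp]
      have h4 : f ≤ 1 / 2 * (y ^ 3)⁻¹ := by
        rw [← div_eq_mul_inv, le_div_iff₀ (by positivity)]; exact hfy
      have h5 : 0 < (y ^ 3)⁻¹ := by positivity
      nlinarith
    have := Real.exp_le_exp.1 h3
    linarith
  have hup : 3 * (m.re + x) - 2 * Real.log f ≤ 8 * L := by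
    have hx1 : x ≤ 1 := by
      rw [← Real.exp_le_exp, hxe]
      have := Real.add_one_le_exp (1 : ℝ)
      linarith
    linarith
  have hmain {ψ : ℝ} (hψ : y ^ 3 * M * f * L / 2 ≤ ψ) : 3 * (m.re + x) - 2 * Real.log f ≤
      4 / π * (Real.exp (3 * (m.re + x) / 2) / f) * ψ := by
    have hpi := Real.pi_lt_d2
    have hpi0 := Real.pi_pos
    calc _ ≤ 8 * L := hup
      _ ≤ 4 / 3.15 * (81 / 100) * 20 / 2 * L := by
        gcongr; norm_num
      _ ≤ 4 / π * Real.exp (3 * x / 2) * M / 2 * L := by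
        gcongr
      _ = 4 / π * (Real.exp (3 * (m.re + x) / 2) / f) * (y ^ 3 * M * f * L / 2) := by
        rw [hexp]; field_simp
      _ ≤ _ := by gcongr
  exact ⟨by linarith, by linarith, hpos, hmain hφ1, hmain hφ2⟩

end Region

/-- Approximation of `D_f` by `F₂(z) = ((2η√z + i)² + e^{4iκ√z})/(4zη²)` in the
region between the critical rays, with error `O(f²·r^{−5/2}(1 + r^{−3/2}))`;
the square root is taken with the branch `z^{1/2} = r^{1/2}e^{iθ/2}`. -/
theorem stmt10 (κ η : ℝ) (hκ : 0 < κ) (hη : 0 < η) (a M : ℝ)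
    (ha0 : 0 < a) (ha1 : a < 1 / 2) (hM : 20 < M) :
    ∃ f₀ > (0 : ℝ), ∃ C > (0 : ℝ), ∀ f : ℝ, 0 < f → f < f₀ → ∀ r θ : ℝ,
      f ^ a < r →
      r ^ (-(3 : ℝ) / 2) * M * f * Real.log (f⁻¹ + r) < θ →
      θ < 4 * π / 3 - (1 + r ^ (-(1 : ℝ) / 2)) * r⁻¹ * M * f * Real.log (f⁻¹ + r) →
      norm (Df κ η f ((r : ℂ) * Complex.exp (Complex.I * θ)) -
          ((2 * η * (((r ^ ((1 : ℝ) / 2) : ℝ) : ℂ) * Complex.exp (Complex.I * θ / 2))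
              + Complex.I) ^ 2
            + Complex.exp (4 * Complex.I * κ *
                (((r ^ ((1 : ℝ) / 2) : ℝ) : ℂ) * Complex.exp (Complex.I * θ / 2))))
            / (4 * ((r : ℂ) * Complex.exp (Complex.I * θ)) * η ^ 2)) ≤
        C * f ^ 2 * r ^ (-(5 : ℝ) / 2) * (1 + r ^ (-(3 : ℝ) / 2)) := by
  obtain ⟨A, hA, hamp⟩ := exists_airyAmp_airyArg_bound
  obtain ⟨ε, hε, C, hC, hest⟩ := exists_Df_estimate hκ hη hA
  set p := 1 - 3 * a / 2 with hp
  have hp0 : 0 < p := by linarith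
  set δ := min ε (min (1 / 2) (1 / (20 * κ))) with hδ
  have hδ0 : 0 < δ := by positivity
  refine ⟨min 1 (min (δ ^ p⁻¹) (Real.exp (-(1 + 3 * κ)))), by positivity, C, hC,
    fun f hf hf0 r θ hr hθ1 hθ2 => ?_⟩
  obtain ⟨hf1, hf0⟩ := lt_min_iff.1 hf0
  obtain ⟨hfδ, hfL⟩ := lt_min_iff.1 hf0
  have hr0 : 0 < r := (Real.rpow_pos_of_pos hf a).trans hr
  have hfp : f ^ p ≤ δ := by
    calc f ^ p ≤ (δ ^ p⁻¹) ^ p := Real.rpow_le_rpow hf.le hfδ.le hp0.le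
      _ = δ := Real.rpow_inv_rpow hδ0.le hp0.ne'
  have hff : f ≤ δ := by
    refine le_trans ?_ hfp
    calc f = f ^ (1 : ℝ) := (Real.rpow_one f).symm
      _ ≤ f ^ p := Real.rpow_le_rpow_of_exponent_ge hf hf1.le (by linarith)
  set m : ℂ := (Real.log r : ℝ) + θ * Complex.I with hm
  have hmre : m.re = Real.log r := by simp [hm]
  have hmim : m.im = θ := by simp [hm]
  set y := Real.exp (-m.re / 2) with hy
  have hy0 : 0 < y := Real.exp_pos _
  have hypow (n : ℕ) (q : ℝ) (hq : q = -n / 2) : r ^ q = y ^ n := by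
    rw [Real.rpow_def_of_pos hr0, hy, ← Real.exp_nat_mul, hmre, hq]; ring_nf
  have hfy : f * y ^ 3 ≤ δ := by
    refine le_trans ?_ hfp
    rw [← hypow 3 (-3 / 2) (by norm_num)]
    calc f * r ^ (-3 / 2 : ℝ) ≤ f * (f ^ a) ^ (-3 / 2 : ℝ) := by
          gcongr f * ?_
          exact Real.rpow_le_rpow_of_nonpos (Real.rpow_pos_of_pos hf a) hr.le (by norm_num)
      _ = f ^ (1 : ℝ) * f ^ (a * (-3 / 2)) := by rw [Real.rpow_one, Real.rpow_mul hf.le]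
      _ = f ^ p := by rw [← Real.rpow_add hf, hp]; ring_nf
  have hδε : δ ≤ ε := min_le_left _ _
  have hδ2 : δ ≤ 1 / 2 := (min_le_right _ _).trans (min_le_left _ _)
  have hδκ : κ * δ ≤ 1 / 20 := by
    calc κ * δ ≤ κ * (1 / (20 * κ)) := by
          gcongr; exact (min_le_right _ _).trans (min_le_right _ _)
      _ = 1 / 20 := by field_simp
  have hκy : κ * (f * y ^ 2) ≤ 1 / 10 := by
    have hy23 : y ^ 2 ≤ 1 + y ^ 3 := by
      rcases le_total y 1 with h1 | h1
      · linarith [pow_le_one₀ (n := 2) hy0.le h1, pow_pos hy0 3]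
      · linarith [pow_le_pow_right₀ h1 (show 2 ≤ 3 by norm_num)]
    calc κ * (f * y ^ 2) ≤ κ * (f * (1 + y ^ 3)) := by gcongr
      _ = κ * (f + f * y ^ 3) := by ring
      _ ≤ κ * (δ + δ) := by gcongr
      _ ≤ _ := by linarith
  set L := Real.log (f⁻¹ + r) with hL
  have hLf : -Real.log f ≤ L := by
    rw [← Real.log_inv]
    exact Real.log_le_log (by positivity) (by linarith)
  have hLm : m.re ≤ L := by
    rw [hmre]
    exact Real.log_le_log hr0 (by linarith [inv_pos.2 hf])
  have hLbig : 1 + 3 * κ ≤ L := by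
    have := Real.log_lt_log hf hfL
    rw [Real.log_exp] at this
    linarith
  have hrinv : r⁻¹ = y ^ 2 := by rw [← Real.rpow_neg_one, hypow 2 (-1) (by norm_num)]
  rw [hypow 3 (-3 / 2) (by norm_num)] at hθ1
  rw [hypow 1 (-1 / 2) (by norm_num), pow_one, hrinv] at hθ2
  have hbounds (τ : ℝ) (hτ : |τ| = κ * f) :
      AmpBounds A f (m + Complex.log (1 + τ * Complex.exp (-m))) := by
    obtain ⟨c1, c2, c3, c4, c5⟩ := airyArg_conditions hf hM hy rfl hτ hκy (hfy.trans hδ2)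
      (by linarith) (by linarith) hLf hLm (by rwa [hmim]) (by rwa [hmim])
    exact hamp f _ hf c1 c2 c3 c4 c5
  have habs : |κ * f| = κ * f := abs_of_pos (by positivity)
  have hb1 := hbounds (κ * f) habs
  have hb2 := hbounds (-(κ * f)) (by rw [abs_neg, habs])
  have hexpm : Complex.exp m = (r : ℂ) * Complex.exp (Complex.I * θ) := by
    rw [hm, Complex.exp_add, exp_ofReal_log hr0, mul_comm Complex.I]
  have hexpm2 : Complex.exp (m / 2) =
      ((r ^ ((1 : ℝ) / 2) : ℝ) : ℂ) * Complex.exp (Complex.I * θ / 2) := by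
    rw [Real.rpow_def_of_pos hr0, Complex.ofReal_exp, ← Complex.exp_add, hm]
    push_cast; ring_nf
  have hpi := Real.pi_pos
  have hL0 : 0 < L := by linarith
  have hθ0 : 0 < θ := lt_trans (by positivity) hθ1
  have hθpi : θ < 4 * π / 3 := hθ2.trans_le (sub_le_self _ (by positivity))
  have him : 0 ≤ (Complex.exp (m / 2)).im := by
    rw [Complex.exp_im]
    refine mul_nonneg (Real.exp_pos _).le (Real.sin_nonneg_of_nonneg_of_le_pi ?_ ?_) <;>
      rw [Complex.div_ofNat_im, hmim] <;> linarith
  have hnorm : ‖(Complex.exp (m / 2))⁻¹‖ = y := by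
    rw [← Complex.exp_neg, Complex.norm_exp, hy]
    congr 1
    simp; ring
  have := hest f y m ((κ * f : ℝ) * Complex.exp (-m)) hf (hff.trans hδε) (hfy.trans hδε) hnorm him
    (by rw [mul_assoc, ← Complex.exp_add]; simp) hb1 (by simpa using hb2)
  rw [hexpm, hexpm2] at this
  refine this.trans (le_of_eq ?_)
  rw [hypow 5 (-5 / 2) (by norm_num), hypow 3 (-3 / 2) (by norm_num)]
  ring
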